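/- Let C_n = (V, E, w) be a vertex-weighted oriented n-cycle with w(x) ≥ 2 for every vertex x, with edge ideal I(C_n) = (x_{i−1} x_i^{w_i} : 1 ≤ i ≤ n) (indices mod n). Then for every integer t ≥ 1: reg(I(C_n)^t) = (Σ_{x∈V} w(x)) − n + 1 + (t−1)(w+1), where w = max{w(x) : x ∈ V}. -/

import Mathlib

open MvPolynomial

noncomputable section

namespace PaperReg

variable (k : Type) [Field k] (σ : Type)

/-- A graded free resolution of a homogeneous ideal `I` of `MvPolynomial σ k`:
finite-rank free modules `Fin (rk i) →₀ S` with basis elements of degrees `deg i`,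
degree-preserving differentials, exact, augmented onto `I`. -/
structure GradedFreeRes (I : Ideal (MvPolynomial σ k)) where
  rk : ℕ → ℕ
  deg : (i : ℕ) → Fin (rk i) → ℕ
  aug : (Fin (rk 0) →₀ MvPolynomial σ k) →ₗ[MvPolynomial σ k] MvPolynomial σ k
  d : (i : ℕ) →
    ((Fin (rk (i + 1)) →₀ MvPolynomial σ k) →ₗ[MvPolynomial σ k] (Fin (rk i) →₀ MvPolynomial σ k))
  aug_range : LinearMap.range aug = I
  exact_zero : LinearMap.range (d 0) = LinearMap.ker aug
  exact_succ : ∀ i, LinearMap.range (d (i + 1)) = LinearMap.ker (d i)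
  aug_graded : ∀ b, (aug (Finsupp.single b 1)).IsHomogeneous (deg 0 b)
  d_graded : ∀ i b c, (d i (Finsupp.single b 1)) c = 0 ∨
    ∃ m, deg (i + 1) b = deg i c + m ∧ ((d i (Finsupp.single b 1)) c).IsHomogeneous m

/-- The `(i,j)`-th graded Betti number of `I`: the minimal number of degree-`j` basis
elements in homological position `i`, over all graded free resolutions of `I`
(achieved by the minimal graded free resolution). -/
def betti (I : Ideal (MvPolynomial σ k)) (i j : ℕ) : ℕ :=
  sInf { r | ∃ F : GradedFreeRes k σ I,
    r = (Finset.univ.filter (fun b => F.deg i b = j)).card }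

/-- Castelnuovo–Mumford regularity: `reg I = max { j - i | betti I i j ≠ 0 }`. -/
def reg (I : Ideal (MvPolynomial σ k)) : ℕ :=
  sSup { r | ∃ i j : ℕ, betti k σ I i j ≠ 0 ∧ r = j - i }

/-- The monic monomial with exponent vector `a`. -/
def mon (a : σ →₀ ℕ) : MvPolynomial σ k := monomial a 1

/-- `I` is a monomial ideal. -/
def IsMonomialIdeal (I : Ideal (MvPolynomial σ k)) : Prop :=
  ∃ A : Set (σ →₀ ℕ), I = Ideal.span (mon k σ '' A)

/-- The exponent vectors of the unique minimal set of monomial generators of a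
monomial ideal: monomials of `I` minimal with respect to divisibility. -/
def minGens (I : Ideal (MvPolynomial σ k)) : Set (σ →₀ ℕ) :=
  { a | mon k σ a ∈ I ∧ ∀ b : σ →₀ ℕ, mon k σ b ∈ I → b ≤ a → b = a }

/-- The support of a monomial ideal: variables appearing in its minimal generators. -/
def isupp (I : Ideal (MvPolynomial σ k)) : Set σ :=
  ⋃ a ∈ minGens k σ I, ↑a.support

variable (n : ℕ) [NeZero n]

/-- The exponent vector of the `i`-th generator `L_i = x_{i-1} x_i ^ (w i)` of the
edge ideal of the vertex-weighted oriented `n`-cycle (indices mod `n`). -/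
def cycE (w : Fin n → ℕ) (i : Fin n) : Fin n →₀ ℕ :=
  Finsupp.single (i - 1) 1 + Finsupp.single i (w i)

/-- The generator `L_i = x_{i-1} x_i ^ (w i)`. -/
def cycL (w : Fin n → ℕ) (i : Fin n) : MvPolynomial (Fin n) k :=
  monomial (cycE n w i) (1 : k)

/-- The edge ideal of the vertex-weighted oriented `n`-cycle with weights `w`. -/
def cycIdeal (w : Fin n → ℕ) : Ideal (MvPolynomial (Fin n) k) :=
  Ideal.span (Set.range (cycL k n w))

/-!
Write `L_i = x_{i-1} x_i ^ w_i`. For the upper bound, adjoin the products `L ^ c` with `|c| = t` to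
`I ^ (t + 1)` one at a time in lexicographic order of `c`, until `I ^ t` is reached. Each step is
governed by the colon ideal of the earlier generators by `L ^ c`, and exponents in its minimal
generators are at most the weights, a weight being attained at most once (up to a factor
`x_0 ^ w_0`); splitting along powers of the variables bounds the regularity of such ideals, and
short exact sequences carry the bounds from `I ^ t` to `I ^ (t + 1)`.

For the lower bound, if `w_m` is the largest weight, then `L_m ^ t * ∏ x_i ^ (w_i - 1)` represents a
socle element modulo `I ^ (t + 1)`. Killing the variables one after the other moves this socle
element up any graded free resolution, one position and one degree at a time, so that position
`n - 1` has a basis element `n` degrees above it.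
-/

section GradedModules

variable {R : Type} [CommRing R] {σ : Type}

variable (R σ) in
/-- The polynomials that are homogeneous of degree `D` once `1` is placed in degree `d`. -/
def shiftedHomogeneous (d D : ℕ) : AddSubgroup (MvPolynomial σ R) :=
  (restrictSupport R {a : σ →₀ ℕ | a.degree + d = D}).toAddSubgroup

theorem mem_shiftedHomogeneous {d D : ℕ} {p : MvPolynomial σ R} :
    p ∈ shiftedHomogeneous R σ d D ↔ ∀ a, coeff a p ≠ 0 → a.degree + d = D :=
  (mem_restrictSupport_iff R).trans
    ⟨fun h _ ha => h (mem_support_iff.2 ha), fun h a ha => h a (mem_support_iff.1 ha)⟩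

theorem isHomogeneous_iff_mem_shiftedHomogeneous {e : ℕ} {p : MvPolynomial σ R} :
    p.IsHomogeneous e ↔ p ∈ shiftedHomogeneous R σ 0 e := by
  simp only [mem_shiftedHomogeneous, IsHomogeneous, IsWeightedHomogeneous,
    Finsupp.degree_eq_weight_one, add_zero]
  rfl

theorem monomial_mem_shiftedHomogeneous (a : σ →₀ ℕ) (r : R) (d : ℕ) :
    monomial a r ∈ shiftedHomogeneous R σ d (a.degree + d) :=
  (monomial_mem_restrictSupport R).2 (Or.inl rfl)

open scoped Pointwise in
theorem mul_mem_shiftedHomogeneous {d e e' D : ℕ} {p q : MvPolynomial σ R}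
    (hp : p ∈ shiftedHomogeneous R σ e e') (hq : q ∈ shiftedHomogeneous R σ d D) :
    p * q ∈ shiftedHomogeneous R σ (e + d) (e' + D) := by
  have hpq : p * q ∈ restrictSupport R
      ({a : σ →₀ ℕ | a.degree + e = e'} + {a : σ →₀ ℕ | a.degree + d = D}) := by
    rw [restrictSupport_add]
    exact Submodule.mul_mem_mul hp hq
  refine restrictSupport_mono R ?_ hpq
  rintro _ ⟨a, rfl, b, rfl, rfl⟩
  change (a + b).degree + (e + d) = _
  rw [map_add]
  omega

theorem mem_shiftedHomogeneous_iff {d D : ℕ} {p : MvPolynomial σ R} :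
    p ∈ shiftedHomogeneous R σ d D ↔ p = 0 ∨ ∃ m, D = d + m ∧ p.IsHomogeneous m := by
  simp only [isHomogeneous_iff_mem_shiftedHomogeneous, mem_shiftedHomogeneous]
  refine ⟨fun hp => or_iff_not_imp_left.2 fun h0 => ?_, ?_⟩
  · obtain ⟨a, ha⟩ := MvPolynomial.ne_zero_iff.1 h0
    have := hp a ha
    exact ⟨a.degree, by omega, fun b hb => by have := hp b hb; omega⟩
  · rintro (rfl | ⟨m, rfl, hm⟩) a ha
    · exact absurd (coeff_zero a) ha
    · have := hm a ha
      omega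

variable (R σ) in
/-- A graded module over the polynomial ring with its standard grading; the graded pieces are
not required to span. -/
structure GradedMod where
  carrier : Type
  [addCommGroup : AddCommGroup carrier]
  [module : Module (MvPolynomial σ R) carrier]
  gr : ℕ → AddSubgroup carrier
  smul_mem : ∀ {e D : ℕ} {p : MvPolynomial σ R} {m : carrier},
    p.IsHomogeneous e → m ∈ gr D → p • m ∈ gr (e + D)

attribute [instance] GradedMod.addCommGroup GradedMod.module

instance : CoeSort (GradedMod R σ) Type := ⟨GradedMod.carrier⟩

theorem smul_mem_shiftedHomogeneous {d e D : ℕ} {p q : MvPolynomial σ R}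
    (hp : p.IsHomogeneous e) (hq : q ∈ shiftedHomogeneous R σ d D) :
    p • q ∈ shiftedHomogeneous R σ d (e + D) := by
  simpa only [zero_add, smul_eq_mul] using
    mul_mem_shiftedHomogeneous (isHomogeneous_iff_mem_shiftedHomogeneous.1 hp) hq

variable (R σ) in
/-- The graded free module with basis elements of degrees `deg`. -/
@[reducible] def GradedMod.free {ι : Type} (deg : ι → ℕ) : GradedMod R σ where
  carrier := ι → MvPolynomial σ R
  gr D := AddSubgroup.pi Set.univ fun i => shiftedHomogeneous R σ (deg i) D
  smul_mem hp hm i hi := smul_mem_shiftedHomogeneous hp (hm i hi)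

theorem GradedMod.mem_free {ι : Type} {deg : ι → ℕ} {D : ℕ} {v : ι → MvPolynomial σ R} :
    v ∈ (free R σ deg).gr D ↔ ∀ i, v i ∈ shiftedHomogeneous R σ (deg i) D := by
  simp only [AddSubgroup.mem_pi, Set.mem_univ, forall_const]

/-- An ideal as a graded module, with `1` placed in degree `d`. -/
@[reducible] def GradedMod.ofIdeal (J : Ideal (MvPolynomial σ R)) (d : ℕ) : GradedMod R σ where
  carrier := J
  gr D := (shiftedHomogeneous R σ d D).comap J.subtype.toAddMonoidHom
  smul_mem hp hm := smul_mem_shiftedHomogeneous hp hm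

/-- The direct sum of two graded modules. -/
@[reducible] def GradedMod.prod (A B : GradedMod R σ) : GradedMod R σ where
  carrier := A × B
  gr D := (A.gr D).prod (B.gr D)
  smul_mem hp hm := ⟨A.smul_mem hp hm.1, B.smul_mem hp hm.2⟩

/-- A submodule with the induced grading. -/
@[reducible] def GradedMod.ofSubmodule (A : GradedMod R σ)
    (N : Submodule (MvPolynomial σ R) A) : GradedMod R σ where
  carrier := N
  gr D := (A.gr D).comap N.subtype.toAddMonoidHom
  smul_mem hp hm := A.smul_mem hp hm

/-- A surjective homomorphism of graded modules which is also surjective in every degree. -/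
structure IsGradedSurj {A B : GradedMod R σ} (f : A →ₗ[MvPolynomial σ R] B) : Prop where
  surjective : Function.Surjective f
  map_mem : ∀ {D : ℕ} {a : A}, a ∈ A.gr D → f a ∈ B.gr D
  exists_lift : ∀ {D : ℕ} {b : B}, b ∈ B.gr D → ∃ a ∈ A.gr D, f a = b

theorem IsGradedSurj.comp {A B C : GradedMod R σ} {g : B →ₗ[MvPolynomial σ R] C}
    {f : A →ₗ[MvPolynomial σ R] B} (hg : IsGradedSurj g) (hf : IsGradedSurj f) :
    IsGradedSurj (g ∘ₗ f) where
  surjective := hg.surjective.comp hf.surjective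
  map_mem ha := hg.map_mem (hf.map_mem ha)
  exists_lift hc := by
    obtain ⟨b, hb, rfl⟩ := hg.exists_lift hc
    obtain ⟨a, ha, rfl⟩ := hf.exists_lift hb
    exact ⟨a, ha, rfl⟩

/-- A short exact sequence of graded modules which is exact in every degree. -/
structure GradedSES (A B C : GradedMod R σ) where
  i : A →ₗ[MvPolynomial σ R] B
  q : B →ₗ[MvPolynomial σ R] C
  injective : Function.Injective i
  exact : Function.Exact i q
  isGradedSurj : IsGradedSurj q
  mem_iff : ∀ {D : ℕ} {a : A}, i a ∈ B.gr D ↔ a ∈ A.gr D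

/-- A finite graded free module mapping onto `M`, surjectively in every degree. -/
structure FreeCover (M : GradedMod R σ) where
  ι : Type
  [fintype : Fintype ι]
  deg : ι → ℕ
  map : GradedMod.free R σ deg →ₗ[MvPolynomial σ R] M
  isGradedSurj : IsGradedSurj map

attribute [instance] FreeCover.fintype

/-- The first syzygy module of `M` with respect to a free cover. -/
@[reducible] def FreeCover.kernel {M : GradedMod R σ} (c : FreeCover M) : GradedMod R σ :=
  .ofSubmodule (.free R σ c.deg) (LinearMap.ker c.map)

/-- `M` has a graded free resolution of length less than `p` whose `i`-th module is generated
in degrees at most `r + i`. -/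
def HasResolution : ℕ → GradedMod R σ → ℕ → Prop
  | 0, M, _ => Subsingleton M
  | p + 1, M, r => ∃ c : FreeCover M, (∀ i, c.deg i ≤ r) ∧ HasResolution p c.kernel (r + 1)

theorem HasResolution.mono_bound {p : ℕ} {M : GradedMod R σ} {r r' : ℕ}
    (h : HasResolution p M r) (hr : r ≤ r') : HasResolution p M r' := by
  induction p generalizing M r r' with
  | zero => exact h
  | succ p ih =>
    obtain ⟨c, hc, hker⟩ := h
    exact ⟨c, fun i => (hc i).trans hr, ih hker (Nat.succ_le_succ hr)⟩

/-- The zero module is covered by the free module of rank zero. -/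
def FreeCover.ofSubsingleton (M : GradedMod R σ) [Subsingleton M] : FreeCover M where
  ι := Empty
  deg _ := 0
  map := 0
  isGradedSurj :=
    { surjective := fun _ => ⟨0, Subsingleton.elim _ _⟩
      map_mem := fun _ => AddSubgroup.zero_mem _
      exists_lift := fun _ => ⟨0, AddSubgroup.zero_mem _, Subsingleton.elim _ _⟩ }

theorem HasResolution.succ {p : ℕ} {M : GradedMod R σ} {r : ℕ} (h : HasResolution p M r) :
    HasResolution (p + 1) M r := by
  induction p generalizing M r with
  | zero =>
    have : Subsingleton M := h
    exact ⟨.ofSubsingleton M, fun i => i.elim,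
      ⟨fun a b => Subtype.ext (funext fun i => i.elim)⟩⟩
  | succ p ih =>
    obtain ⟨c, hc, hker⟩ := h
    exact ⟨c, hc, ih hker⟩

theorem HasResolution.mono_length {p p' : ℕ} {M : GradedMod R σ} {r : ℕ}
    (h : HasResolution p M r) (hp : p ≤ p') : HasResolution p' M r := by
  induction hp with
  | refl => exact h
  | step _ ih => exact ih.succ

theorem map_mem_of_map_single_mem {ι : Type} [Finite ι] [DecidableEq ι] {deg : ι → ℕ}
    {M : GradedMod R σ} {f : GradedMod.free R σ deg →ₗ[MvPolynomial σ R] M}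
    (hf : ∀ i, f (Pi.single i 1) ∈ M.gr (deg i)) {D : ℕ} {v : GradedMod.free R σ deg}
    (hv : v ∈ (GradedMod.free R σ deg).gr D) : f v ∈ M.gr D := by
  cases nonempty_fintype ι
  rw [pi_eq_sum_univ' v, map_sum]
  refine AddSubgroup.sum_mem _ fun i _ => ?_
  rw [map_smul]
  rcases mem_shiftedHomogeneous_iff.1 (GradedMod.mem_free.1 hv i) with h0 | ⟨m, rfl, hm⟩
  · simp only [h0, zero_smul, AddSubgroup.zero_mem]
  · rw [add_comm]
    refine M.smul_mem hm ?_
    convert hf i using 2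

theorem GradedMod.single_mem_free {ι : Type} [DecidableEq ι] (deg : ι → ℕ) (i : ι) :
    (Pi.single i 1 : ι → MvPolynomial σ R) ∈ (free R σ deg).gr (deg i) := by
  refine mem_free.2 fun j => ?_
  rcases eq_or_ne j i with rfl | hj
  · simpa using monomial_mem_shiftedHomogeneous (0 : σ →₀ ℕ) (1 : R) (deg j)
  · rw [Pi.single_eq_of_ne hj]
    exact AddSubgroup.zero_mem _

theorem GradedSES.exists_lift {A B C : GradedMod R σ} (s : GradedSES A B C) (c : FreeCover C) :
    ∃ g : GradedMod.free R σ c.deg →ₗ[MvPolynomial σ R] B, s.q ∘ₗ g = c.map ∧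
      ∀ {D : ℕ} {v}, v ∈ (GradedMod.free R σ c.deg).gr D → g v ∈ B.gr D := by
  classical
  choose b hb hqb using fun j =>
    s.isGradedSurj.exists_lift (c.isGradedSurj.map_mem (GradedMod.single_mem_free c.deg j))
  refine ⟨Fintype.linearCombination (MvPolynomial σ R) b, ?_, fun {D v} hv => ?_⟩
  · refine LinearMap.pi_ext' fun j => LinearMap.ext_ring ?_
    simp only [LinearMap.comp_apply, LinearMap.coe_single, Fintype.linearCombination_apply_single,
      one_smul, hqb]
  · refine map_mem_of_map_single_mem (fun j => ?_) hv
    simpa only [Fintype.linearCombination_apply_single, one_smul] using hb j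

section Horseshoe

variable {A B C : GradedMod R σ} (s : GradedSES A B C) (a : FreeCover A) (c : FreeCover C)
  (g : GradedMod.free R σ c.deg →ₗ[MvPolynomial σ R] B)

/-- The horseshoe map: the sum of a cover of `A` and a lift to `B` of a cover of `C`. -/
def horseshoeMap : GradedMod.free R σ (Sum.elim a.deg c.deg) →ₗ[MvPolynomial σ R] B :=
  (s.i ∘ₗ a.map) ∘ₗ LinearMap.funLeft _ _ Sum.inl + g ∘ₗ LinearMap.funLeft _ _ Sum.inr

theorem horseshoeMap_elim (u : GradedMod.free R σ a.deg) (v : GradedMod.free R σ c.deg) :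
    horseshoeMap s a c g (Sum.elim u v) = s.i (a.map u) + g v := rfl

theorem elim_mem_free {D : ℕ} {u : GradedMod.free R σ a.deg} {v : GradedMod.free R σ c.deg} :
    Sum.elim u v ∈ (GradedMod.free R σ (Sum.elim a.deg c.deg)).gr D ↔
      u ∈ (GradedMod.free R σ a.deg).gr D ∧ v ∈ (GradedMod.free R σ c.deg).gr D := by
  simp only [AddSubgroup.mem_pi, Set.mem_univ, forall_const, Sum.forall, Sum.elim_inl,
    Sum.elim_inr]

variable {s a c g}

theorem q_horseshoeMap (hg : s.q ∘ₗ g = c.map) (u : GradedMod.free R σ a.deg)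
    (v : GradedMod.free R σ c.deg) : s.q (horseshoeMap s a c g (Sum.elim u v)) = c.map v := by
  rw [horseshoeMap_elim, map_add, s.exact.apply_apply_eq_zero, zero_add, ← hg,
    LinearMap.comp_apply]

theorem exists_horseshoeMap_eq (hg : s.q ∘ₗ g = c.map) {x : B} {v : GradedMod.free R σ c.deg}
    (hv : c.map v = s.q x) : ∃ u, horseshoeMap s a c g (Sum.elim u v) = x := by
  obtain ⟨y, hy⟩ := (s.exact (x - g v)).1 (by
    rw [map_sub, ← hv, ← hg, LinearMap.comp_apply, sub_self])
  obtain ⟨u, rfl⟩ := a.isGradedSurj.surjective y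
  exact ⟨u, by rw [horseshoeMap_elim, hy, sub_add_cancel]⟩

theorem exists_horseshoeMap_eq_of_mem (hg : s.q ∘ₗ g = c.map)
    (hgr : ∀ {D : ℕ} {v}, v ∈ (GradedMod.free R σ c.deg).gr D → g v ∈ B.gr D)
    {D : ℕ} {x : B} (hx : x ∈ B.gr D) {v : GradedMod.free R σ c.deg}
    (hvD : v ∈ (GradedMod.free R σ c.deg).gr D) (hv : c.map v = s.q x) :
    ∃ u ∈ (GradedMod.free R σ a.deg).gr D, horseshoeMap s a c g (Sum.elim u v) = x := by
  obtain ⟨y, hy⟩ := (s.exact (x - g v)).1 (by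
    rw [map_sub, ← hv, ← hg, LinearMap.comp_apply, sub_self])
  have hyD : y ∈ A.gr D := s.mem_iff.1 (hy ▸ AddSubgroup.sub_mem _ hx (hgr hvD))
  obtain ⟨u, hu, rfl⟩ := a.isGradedSurj.exists_lift hyD
  exact ⟨u, hu, by rw [horseshoeMap_elim, hy, sub_add_cancel]⟩

variable (s a c g)

/-- The free cover of the middle term of a short exact sequence obtained from free covers of the
outer terms. -/
@[reducible] def FreeCover.horseshoe (hg : s.q ∘ₗ g = c.map)
    (hgr : ∀ {D : ℕ} {v}, v ∈ (GradedMod.free R σ c.deg).gr D → g v ∈ B.gr D) : FreeCover B where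
  ι := a.ι ⊕ c.ι
  deg := Sum.elim a.deg c.deg
  map := horseshoeMap s a c g
  isGradedSurj :=
    { surjective := fun x => by
        obtain ⟨v, hv⟩ := c.isGradedSurj.surjective (s.q x)
        obtain ⟨u, hu⟩ := exists_horseshoeMap_eq hg hv
        exact ⟨_, hu⟩
      map_mem := fun {D v} hv => by
        rw [← Sum.elim_comp_inl_inr v] at hv ⊢
        obtain ⟨hu, hv⟩ := (elim_mem_free a c).1 hv
        exact AddSubgroup.add_mem _ (s.mem_iff.2 (a.isGradedSurj.map_mem hu)) (hgr hv)
      exists_lift := fun {D x} hx => by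
        obtain ⟨v, hv, hvx⟩ := c.isGradedSurj.exists_lift (s.isGradedSurj.map_mem hx)
        obtain ⟨u, hu, hux⟩ := exists_horseshoeMap_eq_of_mem hg hgr hx hv hvx
        exact ⟨_, (elim_mem_free a c).2 ⟨hu, hv⟩, hux⟩ }

/-- The first syzygies of a horseshoe form a short exact sequence. -/
def GradedSES.kernel (hg : s.q ∘ₗ g = c.map)
    (hgr : ∀ {D : ℕ} {v}, v ∈ (GradedMod.free R σ c.deg).gr D → g v ∈ B.gr D) :
    GradedSES a.kernel (FreeCover.horseshoe s a c g hg hgr).kernel c.kernel where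
  i := ((LinearEquiv.sumArrowLequivProdArrow a.ι c.ι _ _).symm.toLinearMap ∘ₗ
      LinearMap.inl _ _ _).restrict fun u (hu : a.map u = 0) => by
    change horseshoeMap s a c g (Sum.elim u 0) = 0
    rw [horseshoeMap_elim, hu, map_zero, map_zero, add_zero]
  q := (LinearMap.funLeft _ _ Sum.inr).restrict fun v (hv : horseshoeMap s a c g v = 0) => by
    rw [← Sum.elim_comp_inl_inr v] at hv
    exact (q_horseshoeMap hg (v ∘ Sum.inl) (v ∘ Sum.inr)).symm.trans (by rw [hv, map_zero])
  injective u u' h := Subtype.ext (funext fun i => congrFun (congrArg Subtype.val h) (Sum.inl i))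
  exact := by
    rintro ⟨v, hv⟩
    refine ⟨fun h0 => ?_, ?_⟩
    · replace h0 : v ∘ Sum.inr = 0 := congrArg Subtype.val h0
      replace hv : horseshoeMap s a c g v = 0 := hv
      have hvl : v = Sum.elim (v ∘ Sum.inl) 0 := h0 ▸ (Sum.elim_comp_inl_inr v).symm
      rw [hvl, horseshoeMap_elim, map_zero, add_zero] at hv
      exact ⟨⟨v ∘ Sum.inl, s.injective (hv.trans (map_zero _).symm)⟩, Subtype.ext hvl.symm⟩
    · rintro ⟨u, hu⟩
      rw [← hu]
      rfl
  isGradedSurj :=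
    { surjective := fun ⟨v, hv⟩ => by
        obtain ⟨u, hu⟩ := exists_horseshoeMap_eq (x := 0) hg (hv.trans (map_zero _).symm)
        exact ⟨⟨Sum.elim u v, hu⟩, rfl⟩
      map_mem := fun {D v} hv => GradedMod.mem_free.2 fun j => GradedMod.mem_free.1 hv (Sum.inr j)
      exists_lift := fun {D} ⟨v, hv⟩ hvD => by
        obtain ⟨u, hu, hux⟩ := exists_horseshoeMap_eq_of_mem (x := 0) hg hgr
          (AddSubgroup.zero_mem _) hvD (hv.trans (map_zero _).symm)
        exact ⟨⟨Sum.elim u v, hux⟩, (elim_mem_free a c).2 ⟨hu, hvD⟩, rfl⟩ }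
  mem_iff := (elim_mem_free a c).trans (and_iff_left (AddSubgroup.zero_mem _))

end Horseshoe

theorem HasResolution.horseshoe {p : ℕ} {A B C : GradedMod R σ} {r : ℕ} (s : GradedSES A B C)
    (hA : HasResolution p A r) (hC : HasResolution p C r) : HasResolution p B r := by
  induction p generalizing A B C r with
  | zero =>
    have : Subsingleton A := hA
    have : Subsingleton C := hC
    refine ⟨fun x y => sub_eq_zero.1 ?_⟩
    obtain ⟨a, ha⟩ := (s.exact (x - y)).1 (Subsingleton.elim _ _)
    rw [← ha, Subsingleton.elim a 0, map_zero]
  | succ p ih =>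
    obtain ⟨a, ha, ha'⟩ := hA
    obtain ⟨c, hc, hc'⟩ := hC
    obtain ⟨g, hg, hgr⟩ := s.exists_lift c
    exact ⟨.horseshoe s a c g hg hgr, Sum.forall.2 ⟨ha, hc⟩, ih (s.kernel a c g hg hgr) ha' hc'⟩

/-- `M` has a finite graded free resolution whose `i`-th module is generated in degrees at most
`r + i`, that is, the Castelnuovo–Mumford regularity of `M` is at most `r`. -/
def HasRegLE (M : GradedMod R σ) (r : ℕ) : Prop := ∃ p, HasResolution p M r

theorem HasRegLE.mono {M : GradedMod R σ} {r r' : ℕ} (h : HasRegLE M r) (hr : r ≤ r') :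
    HasRegLE M r' :=
  h.imp fun _ hp => hp.mono_bound hr

theorem HasRegLE.of_ses {A B C : GradedMod R σ} {r : ℕ} (s : GradedSES A B C)
    (hA : HasRegLE A r) (hC : HasRegLE C r) : HasRegLE B r := by
  obtain ⟨p, hp⟩ := hA
  obtain ⟨p', hp'⟩ := hC
  exact ⟨max p p', (hp.mono_length (le_max_left _ _)).horseshoe s
    (hp'.mono_length (le_max_right _ _))⟩

/-- A free cover of the middle term of a short exact sequence covers the quotient. -/
@[reducible] def FreeCover.quotient {A B C : GradedMod R σ} (s : GradedSES A B C)
    (b : FreeCover B) : FreeCover C where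
  ι := b.ι
  deg := b.deg
  map := s.q ∘ₗ b.map
  isGradedSurj := s.isGradedSurj.comp b.isGradedSurj

/-- The syzygies of the quotient `C` for a cover of `B` are an extension of `A` by the syzygies
of `B`. -/
def GradedSES.kernelQuotient {A B C : GradedMod R σ} (s : GradedSES A B C) (b : FreeCover B) :
    GradedSES b.kernel (b.quotient s).kernel A :=
  have hrange : ∀ v : LinearMap.ker (s.q ∘ₗ b.map), b.map v ∈ LinearMap.range s.i := fun v =>
    (s.exact _).1 v.2
  let q : (b.quotient s).kernel →ₗ[MvPolynomial σ R] A := LinearMap.codRestrictOfInjective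
    (b.map ∘ₗ Submodule.subtype _) s.i s.injective hrange
  have hq : ∀ v : LinearMap.ker (s.q ∘ₗ b.map), s.i (q v) = b.map v :=
    LinearMap.codRestrictOfInjective_comp_apply _ _ _ hrange
  have mem_kernel : ∀ {v a}, b.map v = s.i a → s.q (b.map v) = 0 := fun {v a} h => by
    rw [h, s.exact.apply_apply_eq_zero]
  { i := Submodule.inclusion fun v (hv : b.map v = 0) => by
      change s.q (b.map v) = 0
      rw [hv, map_zero]
    q := q
    injective := Submodule.inclusion_injective _
    exact := fun v => by
      refine ⟨fun h0 => ⟨⟨v, ?_⟩, rfl⟩, ?_⟩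
      · change b.map v = 0
        rw [← hq, h0, map_zero]
      · rintro ⟨u, rfl⟩
        exact s.injective ((hq _).trans (u.2.trans (map_zero _).symm))
    isGradedSurj :=
      { surjective := fun a => by
          obtain ⟨v, hv⟩ := b.isGradedSurj.surjective (s.i a)
          exact ⟨⟨v, mem_kernel hv⟩, s.injective ((hq _).trans hv)⟩
        map_mem := fun {D v} hv => by
          rw [← s.mem_iff, hq]
          exact b.isGradedSurj.map_mem hv
        exists_lift := fun {D a} ha => by
          obtain ⟨v, hvD, hv⟩ := b.isGradedSurj.exists_lift (s.mem_iff.2 ha)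
          exact ⟨⟨v, mem_kernel hv⟩, hvD, s.injective ((hq _).trans hv)⟩ }
    mem_iff := Iff.rfl }

theorem HasRegLE.quotient {A B C : GradedMod R σ} {r : ℕ} (s : GradedSES A B C)
    (hA : HasRegLE A (r + 1)) (hB : HasRegLE B r) : HasRegLE C r := by
  obtain ⟨p, hp⟩ := hB
  obtain ⟨b, hb, hker⟩ := hp.succ
  obtain ⟨p', hp'⟩ := HasRegLE.of_ses (s.kernelQuotient b) ⟨p, hker⟩ hA
  exact ⟨p' + 1, b.quotient s, hb, hp'⟩

/-- The split short exact sequence of a direct sum. -/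
def GradedSES.split (A B : GradedMod R σ) : GradedSES B (.prod A B) A where
  i := LinearMap.inr _ _ _
  q := LinearMap.fst _ _ _
  injective := LinearMap.inr_injective
  exact := .inr_fst
  isGradedSurj :=
    { surjective := LinearMap.fst_surjective
      map_mem := fun hb => hb.1
      exists_lift := fun hc => ⟨(_, 0), ⟨hc, AddSubgroup.zero_mem _⟩, rfl⟩ }
  mem_iff := ⟨fun h => h.2, fun h => ⟨AddSubgroup.zero_mem _, h⟩⟩

end GradedModules

section MonomialIdeals

variable {R : Type} [CommRing R] {σ : Type} {U : UpperSet (σ →₀ ℕ)} {m : σ →₀ ℕ}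

variable (R) in
/-- The monomial ideal whose monomials have their exponents in `U`. For the order on `UpperSet`,
adjoining the monomial with exponent `m` gives `U ⊓ UpperSet.Ici m`. -/
def monomialIdeal (U : UpperSet (σ →₀ ℕ)) : Ideal (MvPolynomial σ R) :=
  restrictSupportIdeal R U U.upper

theorem mem_monomialIdeal {p : MvPolynomial σ R} :
    p ∈ monomialIdeal R U ↔ ∀ a, coeff a p ≠ 0 → a ∈ U :=
  ⟨fun h _ ha => h (mem_support_iff.2 ha), fun h a ha => h a (mem_support_iff.1 ha)⟩

theorem monomialIdeal_antitone : Antitone (monomialIdeal R : UpperSet (σ →₀ ℕ) → _) :=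
  fun _ _ h => restrictSupport_mono R (UpperSet.coe_subset_coe.2 h)

/-- The exponents of the colon ideal by the monomial with exponent `m`. -/
def colon (U : UpperSet (σ →₀ ℕ)) (m : σ →₀ ℕ) : UpperSet (σ →₀ ℕ) where
  carrier := {a | a + m ∈ U}
  upper' _ _ hab ha := U.upper (add_le_add_left hab m) ha

theorem mem_colon {a : σ →₀ ℕ} : a ∈ colon U m ↔ a + m ∈ U := Iff.rfl

theorem mul_monomial_mem_monomialIdeal {p : MvPolynomial σ R} :
    p * monomial m 1 ∈ monomialIdeal R U ↔ p ∈ monomialIdeal R (colon U m) := by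
  classical
  simp only [mem_monomialIdeal, coeff_mul_monomial', mem_colon]
  refine ⟨fun h a ha => h (a + m) ?_, fun h a ha => ?_⟩
  · simpa using ha
  · split_ifs at ha with hm
    · simpa only [tsub_add_cancel_of_le hm] using h (a - m) (by simpa using ha)
    · exact absurd rfl ha

theorem mul_monomial_mem_shiftedHomogeneous {p : MvPolynomial σ R} {d D : ℕ}
    (hp : p ∈ shiftedHomogeneous R σ (m.degree + d) D) :
    p * monomial m 1 ∈ shiftedHomogeneous R σ d D := by
  classical
  rw [mem_shiftedHomogeneous] at hp ⊢
  intro a ha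
  rw [coeff_mul_monomial'] at ha
  split_ifs at ha with hm
  · have := hp (a - m) (by simpa using ha)
    rw [← tsub_add_cancel_of_le hm, map_add]
    omega
  · exact absurd rfl ha

theorem modMonomial_mem_shiftedHomogeneous {p : MvPolynomial σ R} {d D : ℕ}
    (hp : p ∈ shiftedHomogeneous R σ d D) : p.modMonomial m ∈ shiftedHomogeneous R σ d D := by
  rw [mem_shiftedHomogeneous] at hp ⊢
  intro a ha
  have hm : ¬m ≤ a := fun h => ha (coeff_modMonomial_of_le _ h)
  exact hp a (coeff_modMonomial_of_not_le p hm ▸ ha)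

theorem divMonomial_mem_shiftedHomogeneous {p : MvPolynomial σ R} {d D : ℕ}
    (hp : p ∈ shiftedHomogeneous R σ d D) :
    p.divMonomial m ∈ shiftedHomogeneous R σ (m.degree + d) D := by
  rw [mem_shiftedHomogeneous] at hp ⊢
  intro a ha
  have := hp _ (coeff_divMonomial m p a ▸ ha)
  rw [map_add] at this
  omega

theorem modMonomial_mem_monomialIdeal {p : MvPolynomial σ R}
    (hp : p ∈ monomialIdeal R (U ⊓ UpperSet.Ici m)) : p.modMonomial m ∈ monomialIdeal R U := by
  rw [mem_monomialIdeal] at hp ⊢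
  intro a ha
  have hm : ¬m ≤ a := fun h => ha (coeff_modMonomial_of_le _ h)
  exact (UpperSet.mem_inf_iff.1 (hp a (coeff_modMonomial_of_not_le p hm ▸ ha))).resolve_right hm

theorem modMonomial_add_divMonomial_mul (p : MvPolynomial σ R) (m : σ →₀ ℕ) :
    p.modMonomial m + p.divMonomial m * monomial m 1 = p := by
  rw [add_comm, mul_comm, divMonomial_add_modMonomial]

theorem mul_monomial_mem_monomialIdeal_inf (p : MvPolynomial σ R) :
    p * monomial m 1 ∈ monomialIdeal R (U ⊓ UpperSet.Ici m) :=
  mul_monomial_mem_monomialIdeal.2 (mem_monomialIdeal.2 fun a _ => Or.inr (le_add_self : m ≤ a + m))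

variable (R U m) in
/-- The sequence `0 → (I : x^m)(-|m|) → I ⊕ S(-|m|) → I + (x^m) → 0` with maps
`p ↦ (p x^m, -p)` and `(x, y) ↦ x + y x^m`. -/
def colonSES (d : ℕ) :
    GradedSES (.ofIdeal (monomialIdeal R (colon U m)) (m.degree + d))
      (.prod (.ofIdeal (monomialIdeal R U) d) (.ofIdeal ⊤ (m.degree + d)))
      (.ofIdeal (monomialIdeal R (U ⊓ UpperSet.Ici m)) d) where
  i := ((LinearMap.mulRight _ (monomial m 1)).restrict
    fun _ => mul_monomial_mem_monomialIdeal.2).prod (-Submodule.inclusion le_top)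
  q := (Submodule.inclusion (monomialIdeal_antitone inf_le_left)).coprod
    ((LinearMap.mulRight _ (monomial m 1)).restrict
      fun p _ => mul_monomial_mem_monomialIdeal_inf p)
  injective p p' h := by
    have h2 : -p.1 = -p'.1 := congrArg Subtype.val (congrArg Prod.snd h)
    exact Subtype.ext (neg_injective h2)
  exact := by
    rintro ⟨⟨x, hx⟩, ⟨y, hy⟩⟩
    constructor
    · intro h
      have h' : x + y * monomial m 1 = 0 := congrArg Subtype.val h
      have hxy : -y * monomial m 1 = x := by linear_combination -h'
      exact ⟨⟨-y, mul_monomial_mem_monomialIdeal.1 (hxy ▸ hx)⟩,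
        Prod.ext (Subtype.ext hxy) (Subtype.ext (neg_neg y))⟩
    · rintro ⟨⟨p, _⟩, hp⟩
      have hx : p * monomial m 1 = x := congrArg (fun z => z.1.1) hp
      have hy : -p = y := congrArg (fun z => z.2.1) hp
      refine Subtype.ext ?_
      change x + y * monomial m 1 = 0
      rw [← hx, ← hy]
      ring
  isGradedSurj :=
    { surjective := fun ⟨p, hp⟩ =>
        ⟨(⟨_, modMonomial_mem_monomialIdeal hp⟩, ⟨p.divMonomial m, trivial⟩),
          Subtype.ext (modMonomial_add_divMonomial_mul p m)⟩
      map_mem := fun hx => AddSubgroup.add_mem _ hx.1 (mul_monomial_mem_shiftedHomogeneous hx.2)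
      exists_lift := fun {_} ⟨p, hp⟩ hD =>
        ⟨(⟨_, modMonomial_mem_monomialIdeal hp⟩, ⟨p.divMonomial m, trivial⟩),
          ⟨modMonomial_mem_shiftedHomogeneous hD, divMonomial_mem_shiftedHomogeneous hD⟩,
          Subtype.ext (modMonomial_add_divMonomial_mul p m)⟩ }
  mem_iff := fun {D p} =>
    ⟨fun h => neg_neg p ▸ AddSubgroup.neg_mem _ h.2, fun h =>
      ⟨mul_monomial_mem_shiftedHomogeneous h, AddSubgroup.neg_mem _ h⟩⟩

/-- The polynomial ring covers itself. -/
def FreeCover.top (d : ℕ) : FreeCover (.ofIdeal (⊤ : Ideal (MvPolynomial σ R)) d) where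
  ι := Unit
  deg _ := d
  map := Submodule.topEquiv.symm.toLinearMap ∘ₗ LinearMap.proj ()
  isGradedSurj :=
    { surjective := fun x => ⟨fun _ => x, rfl⟩
      map_mem := fun hv => GradedMod.mem_free.1 hv ()
      exists_lift := fun {_ x} hx => ⟨fun _ => x, GradedMod.mem_free.2 fun _ => hx, rfl⟩ }

theorem hasRegLE_top (d : ℕ) : HasRegLE (.ofIdeal (⊤ : Ideal (MvPolynomial σ R)) d) d :=
  ⟨1, FreeCover.top d, fun _ => le_rfl, ⟨fun a b => Subtype.ext (funext fun _ =>
    (congrArg Subtype.val a.2).trans (congrArg Subtype.val b.2).symm)⟩⟩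

variable (R) in
/-- The monomial ideal of `U` has regularity at most `r`. Asking this for all shifts `d` saves
the comparison of the resolutions of a module and of its shifts. -/
def MonomialRegLE (U : UpperSet (σ →₀ ℕ)) (r : ℕ) : Prop :=
  ∀ d, HasRegLE (.ofIdeal (monomialIdeal R U) d) (r + d)

namespace MonomialRegLE

variable {r r' : ℕ}

theorem mono (h : MonomialRegLE R U r) (hr : r ≤ r') : MonomialRegLE R U r' :=
  fun d => (h d).mono (Nat.add_le_add_right hr d)

theorem of_zero_mem (h : 0 ∈ U) (r : ℕ) : MonomialRegLE R U r := by
  have htop : monomialIdeal R U = ⊤ :=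
    eq_top_iff.2 fun _ _ => mem_monomialIdeal.2 fun _ _ => U.upper zero_le h
  exact fun d => htop ▸ (hasRegLE_top d).mono le_add_self

variable (R σ) in
theorem empty (r : ℕ) : MonomialRegLE R (⊤ : UpperSet (σ →₀ ℕ)) r := by
  have hbot : monomialIdeal R (⊤ : UpperSet (σ →₀ ℕ)) = ⊥ := by
    refine eq_bot_iff.2 fun p hp => (Submodule.mem_bot _).2 (ext _ _ fun a => ?_)
    by_contra ha
    exact UpperSet.notMem_top (mem_monomialIdeal.1 hp a ha)
  exact fun d => hbot ▸ ⟨0, inferInstanceAs (Subsingleton (⊥ : Ideal (MvPolynomial σ R)))⟩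

/-- `reg I ≤ max (reg (I : x^m) + |m|) (reg (I + (x^m)))`. -/
theorem of_colon_of_inf (hcolon : MonomialRegLE R (colon U m) r') (hr : r' + m.degree ≤ r)
    (hinf : MonomialRegLE R (U ⊓ UpperSet.Ici m) r) : MonomialRegLE R U r := fun d =>
  .quotient (.split _ _) ((hasRegLE_top (m.degree + d)).mono (by omega))
    (.of_ses (colonSES R U m d) ((hcolon _).mono (by omega)) (hinf d))

/-- `reg (I + (x^m)) ≤ max (reg (I : x^m) + |m| - 1) (max (reg I) |m|)`. -/
theorem inf_Ici (hcolon : MonomialRegLE R (colon U m) r') (hr : r' + m.degree ≤ r + 1)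
    (hU : MonomialRegLE R U r) (hm : m.degree ≤ r) : MonomialRegLE R (U ⊓ UpperSet.Ici m) r :=
  fun d => .quotient (colonSES R U m d) ((hcolon _).mono (by omega))
    (.of_ses (.split _ _) ((hasRegLE_top (m.degree + d)).mono (by omega)) (hU d))

/-- A chain of colon ideals bounds the regularity: the monomials `m i` are adjoined to `U` one
after the other. -/
theorem of_chain {ι : Type*} [LinearOrder ι] (s : Finset ι) (m : ι → σ →₀ ℕ)
    (hcolon : ∀ i ∈ s, ∃ r', r' + (m i).degree ≤ r ∧
      MonomialRegLE R (colon (U ⊓ {j ∈ s | j < i}.inf fun j => UpperSet.Ici (m j)) (m i)) r')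
    (hinf : MonomialRegLE R (U ⊓ s.inf fun j => UpperSet.Ici (m j)) r) : MonomialRegLE R U r := by
  induction s using Finset.induction_on_max with
  | empty => simpa using hinf
  | insert i s hi ih =>
    have hs : {j ∈ insert i s | j < i} = s := by
      ext j
      grind
    refine ih (fun j hj => ?_) ?_
    · obtain ⟨r', hr, h⟩ := hcolon j (Finset.mem_insert_of_mem hj)
      have hs' : {l ∈ insert i s | l < j} = {l ∈ s | l < j} := by
        ext l
        have := hi j hj
        grind
      exact ⟨r', hr, hs' ▸ h⟩
    · obtain ⟨r', hr, h⟩ := hcolon i (Finset.mem_insert_self _ _)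
      rw [hs] at h
      refine of_colon_of_inf h hr ?_
      rwa [Finset.inf_insert, inf_comm (UpperSet.Ici _), ← inf_assoc] at hinf

end MonomialRegLE

end MonomialIdeals

section AlmostBelow

variable {R : Type} [CommRing R] {σ : Type} {w w' : σ → ℕ} {b b' : σ →₀ ℕ}
  {U : UpperSet (σ →₀ ℕ)} {p q : σ} {v : ℕ}

theorem mem_inf_Ici {ι : Type*} {s : Finset ι} {m : ι → σ →₀ ℕ} {a : σ →₀ ℕ} :
    a ∈ s.inf (fun i => UpperSet.Ici (m i)) ↔ ∃ i ∈ s, m i ≤ a := by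
  simp only [Finset.inf_eq_iInf, UpperSet.mem_iInf_iff, UpperSet.mem_Ici_iff, exists_prop]

theorem self_mem_inf_Ici : b ∈ U ⊓ UpperSet.Ici b :=
  Or.inr (UpperSet.mem_Ici_iff.2 le_rfl)

/-- `b` is bounded by `w`, and reaches the bound in at most one place. -/
structure AlmostBelow (w : σ → ℕ) (b : σ →₀ ℕ) : Prop where
  le : ∀ p, b p ≤ w p
  unique : ∀ p q, b p = w p → b q = w q → p = q

/-- The monomial ideal of `U` is generated by monomials whose exponents are almost below `w`. -/
def GeneratedAlmostBelow (w : σ → ℕ) (U : UpperSet (σ →₀ ℕ)) : Prop :=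
  ∀ b ∈ U, ∃ b' ∈ U, b' ≤ b ∧ AlmostBelow w b'

theorem AlmostBelow.of_forall_ne (hp : b p ≤ w p) (hb : ∀ q, q ≠ p → b q < w q) :
    AlmostBelow w b := by
  have eq_p : ∀ q, b q = w q → q = p := fun q hq => by
    by_contra hne
    exact (hb q hne).ne hq
  refine ⟨fun q => ?_, fun q r hq hr => (eq_p q hq).trans (eq_p r hr).symm⟩
  rcases eq_or_ne q p with rfl | h
  exacts [hp, (hb q h).le]

theorem AlmostBelow.of_forall_lt (hb : ∀ q, b q < w q) : AlmostBelow w b :=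
  ⟨fun q => (hb q).le, fun q _ hq => absurd hq (hb q).ne⟩

theorem AlmostBelow.single (hw : ∀ p, 1 ≤ w p) (hv : v ≤ w p) :
    AlmostBelow w (Finsupp.single p v) :=
  .of_forall_ne (p := p) (by simpa using hv) fun q hq => by
    simpa [Finsupp.single_eq_of_ne hq] using Nat.succ_le_iff.1 (hw q)

theorem AlmostBelow.transfer (h : AlmostBelow w b)
    (hb : ∀ p, b' p < w' p ∨ b' p = w' p ∧ b p = w p) : AlmostBelow w' b' where
  le p := (hb p).elim le_of_lt fun h => h.1.le
  unique p q hp hq :=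
    h.unique p q ((hb p).resolve_left hp.not_lt).2 ((hb q).resolve_left hq.not_lt).2

namespace GeneratedAlmostBelow

variable (hU : GeneratedAlmostBelow w U)
include hU

theorem inf_Ici (hb : AlmostBelow w b) : GeneratedAlmostBelow w (U ⊓ UpperSet.Ici b) := by
  rintro a (ha | ha)
  · obtain ⟨b', hb', hle, hwb⟩ := hU a ha
    exact ⟨b', Or.inl hb', hle, hwb⟩
  · exact ⟨b, self_mem_inf_Ici, ha, hb⟩

variable [DecidableEq σ]

theorem update (hw : ∀ p, 1 ≤ w p) (hv : Finsupp.single p v ∈ U) :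
    GeneratedAlmostBelow (Function.update w p v) U := by
  intro b hb
  obtain ⟨b', hb', hle, hwb⟩ := hU b hb
  rcases lt_or_ge (b' p) v with hlt | hge
  · refine ⟨b', hb', hle, hwb.transfer fun q => ?_⟩
    rcases eq_or_ne q p with rfl | hq
    · exact Or.inl (by rwa [Function.update_self])
    · rw [Function.update_of_ne hq]
      exact (hwb.le q).lt_or_eq.imp_right fun h => ⟨h, h⟩
  · refine ⟨_, hv, Finsupp.single_le_iff.2 (hge.trans (hle p)),
      .of_forall_ne (p := p) (by simp) fun q hq => ?_⟩
    rw [Finsupp.single_eq_of_ne hq, Function.update_of_ne hq]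
    exact hw q

theorem colon_single (hv : v < w p) :
    GeneratedAlmostBelow (Function.update w p (w p - v)) (colon U (Finsupp.single p v)) := by
  intro b hb
  obtain ⟨b', hb', hle, hwb⟩ := hU _ hb
  refine ⟨b' - Finsupp.single p v, U.upper le_tsub_add hb', tsub_le_iff_right.2 hle,
    hwb.transfer fun q => ?_⟩
  have hq := hwb.le q
  rcases eq_or_ne q p with rfl | hqp
  · rw [Function.update_self, Finsupp.tsub_apply, Finsupp.single_eq_same]
    omega
  · rw [Function.update_of_ne hqp, Finsupp.tsub_apply, Finsupp.single_eq_of_ne hqp]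
    omega

end GeneratedAlmostBelow

theorem one_le_update [DecidableEq σ] (hw : ∀ p, 1 ≤ w p) (hv : 1 ≤ v) (q : σ) :
    1 ≤ Function.update w p v q :=
  (Function.forall_update_iff w (p := fun _ x => 1 ≤ x)).2 ⟨hv, fun q _ => hw q⟩ q

theorem sum_update_sub_one [Fintype σ] [DecidableEq σ] (w : σ → ℕ) (p : σ) (v : ℕ) :
    ∑ q, (Function.update w p v q - 1) + (w p - 1) = ∑ q, (w q - 1) + (v - 1) := by
  have hupdate : ∀ q, Function.update w p v q - 1 =
      Function.update (fun q => w q - 1) p (v - 1) q := fun q => by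
    rcases eq_or_ne q p with rfl | hq
    · simp only [Function.update_self]
    · simp only [Function.update_of_ne hq]
  simp only [hupdate, Finset.sum_update_of_mem (Finset.mem_univ p), ← Finset.erase_eq,
    ← Finset.add_sum_erase _ (fun q => w q - 1) (Finset.mem_univ p)]
  omega

namespace MonomialRegLE

variable (R) in
theorem span_variables (T : Finset σ) :
    MonomialRegLE R (T.inf fun p => UpperSet.Ici (Finsupp.single p 1)) 1 := by
  classical
  induction T using Finset.induction_on with
  | empty => simpa only [Finset.inf_empty] using empty R σ 1
  | insert p T hp ih =>
    have hcolon : colon (T.inf fun p => UpperSet.Ici (Finsupp.single p 1)) (Finsupp.single p 1) =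
        T.inf fun p => UpperSet.Ici (Finsupp.single p 1) := by
      ext a
      simp only [SetLike.mem_coe, mem_colon, mem_inf_Ici, Finsupp.single_le_iff]
      refine exists_congr fun q => and_congr_right fun hq => ?_
      rw [Finsupp.add_apply, Finsupp.single_eq_of_ne (ne_of_mem_of_not_mem hq hp), add_zero]
    rw [Finset.inf_insert, inf_comm]
    exact inf_Ici (hcolon.symm ▸ ih) (by simp) ih (by simp)

/-- When `w` is identically `1`, the generators are variables, unless the ideal is everything. -/
theorem of_forall_eq_one [Finite σ] (hw : ∀ p, w p = 1) (hU : GeneratedAlmostBelow w U) :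
    MonomialRegLE R U 1 := by
  classical
  cases nonempty_fintype σ
  by_cases h0 : 0 ∈ U
  · exact of_zero_mem h0 1
  suffices hvar : U = ({p | Finsupp.single p 1 ∈ U} : Finset σ).inf
      fun p => UpperSet.Ici (Finsupp.single p 1) by
    rw [hvar]
    exact span_variables R _
  ext a
  simp only [SetLike.mem_coe, mem_inf_Ici, Finset.mem_filter, Finset.mem_univ, true_and]
  refine ⟨fun ha => ?_, fun ⟨p, hp, hle⟩ => U.upper hle hp⟩
  obtain ⟨b, hb, hle, hwb⟩ := hU a ha
  have hb0 : b ≠ 0 := fun h => h0 (h ▸ hb)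
  obtain ⟨p, hp⟩ := Finsupp.ne_iff.1 hb0
  have tight : ∀ q, b q ≠ 0 → b q = w q := fun q hq => by
    have := hwb.le q
    have := hw q
    omega
  have hbp : b = Finsupp.single p 1 := by
    refine Finsupp.ext fun q => ?_
    rcases eq_or_ne q p with rfl | hq
    · rw [Finsupp.single_eq_same, tight q hp, hw]
    · rw [Finsupp.single_eq_of_ne hq]
      by_contra hq0
      exact hq (hwb.unique q p (tight q hq0) (tight p hp))
  exact ⟨p, hbp ▸ hb, hbp ▸ hle⟩

variable [Fintype σ]

theorem of_generatedAlmostBelow (hw : ∀ p, 1 ≤ w p) (hU : GeneratedAlmostBelow w U) :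
    MonomialRegLE R U (∑ p, (w p - 1) + 1) := by
  classical
  induction hN : ∑ p, (w p - 1) using Nat.strong_induction_on generalizing w U with
  | _ N ih =>
  by_cases hone : ∀ p, w p = 1
  · exact (of_forall_eq_one hone hU).mono (by omega)
  obtain ⟨p, hp⟩ := not_forall.1 hone
  have hwp : 1 < w p := (hw p).lt_of_ne' hp
  have hsum := sum_update_sub_one w p (w p - 1)
  have hsum' := sum_update_sub_one w p 1
  have hcolon := ih _ (by omega) (one_le_update hw (by omega)) (hU.colon_single hwp) rfl
  have hinf := ih _ (by omega) (one_le_update (p := p) hw le_rfl)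
    ((hU.inf_Ici (.single hw (hw p))).update hw self_mem_inf_Ici) rfl
  refine of_colon_of_inf hcolon ?_ (hinf.mono (by omega))
  rw [Finsupp.degree_single]
  omega

/-- The extra generator makes the ideal smaller in two directions at once after splitting along
`x_q ^ (w q - 1)`. -/
theorem of_generatedAlmostBelow_of_mem (hw : ∀ p, 1 ≤ w p) (hU : GeneratedAlmostBelow w U)
    (hpq : p ≠ q) (hp : 2 ≤ w p) (hq : 2 ≤ w q)
    (hmem : Finsupp.single p 1 + Finsupp.single q (w q - 1) ∈ U) :
    MonomialRegLE R U (∑ p, (w p - 1)) := by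
  classical
  have hcolon := of_generatedAlmostBelow (R := R)
    (one_le_update (one_le_update hw (by omega)) le_rfl)
    ((hU.colon_single (p := q) (v := w q - 1) (by omega)).update (p := p) (v := 1)
      (one_le_update hw (by omega)) hmem)
  have hinf := of_generatedAlmostBelow (R := R) (one_le_update hw (by omega))
    ((hU.inf_Ici (.single hw (Nat.sub_le _ 1))).update (p := q) (v := w q - 1) hw self_mem_inf_Ici)
  have hsum := sum_update_sub_one w q (w q - 1)
  have hsum' := sum_update_sub_one w q (w q - (w q - 1))
  have hsum'' := sum_update_sub_one (Function.update w q (w q - (w q - 1))) p 1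
  rw [Function.update_of_ne hpq] at hsum''
  refine of_colon_of_inf hcolon ?_ (hinf.mono (by omega))
  rw [Finsupp.degree_single]
  omega

end MonomialRegLE

end AlmostBelow

section LexExponents

variable {n : ℕ} {c c' d e : Fin n → ℕ} {t : ℕ} {p : Fin n}

theorem pi_single_le {v : ℕ} (h : v ≤ c p) : Pi.single p v ≤ c :=
  update_le_iff.2 ⟨h, fun _ _ => Nat.zero_le _⟩

/-- The compositions of `t` into `n` parts, in lexicographic order. -/
def lexCompositions (n t : ℕ) : Finset (Lex (Fin n → ℕ)) :=
  (Finset.piAntidiag Finset.univ t).map toLex.toEmbedding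

theorem mem_lexCompositions {x : Lex (Fin n → ℕ)} :
    x ∈ lexCompositions n t ↔ ∑ i, ofLex x i = t := by
  simp only [lexCompositions, Finset.mem_map_equiv, Finset.mem_piAntidiag, Finset.mem_univ,
    implies_true, and_true]
  rfl

/-- The order in which the generators enter the colon ideals: `L ^ e` precedes `L ^ d` if it is a
generator of the next power of the ideal, or one of the same power with a smaller exponent. -/
def Precedes (e d : Fin n → ℕ) : Prop :=
  ∑ i, e i = ∑ i, d i + 1 ∨ ∑ i, e i = ∑ i, d i ∧ toLex e < toLex d

theorem Precedes.add_left (h : Precedes e d) (m : Fin n → ℕ) : Precedes (m + e) (m + d) := by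
  simp only [Precedes, Pi.add_apply, Finset.sum_add_distrib]
  refine h.imp (fun _ => by omega) fun ⟨_, hlex⟩ => ⟨by omega, ?_⟩
  exact add_lt_add_right hlex (toLex m)

theorem Precedes.tsub (h : Precedes c' c) : Precedes (c' - c) (c - c') := by
  have hsum : ∑ i, (c' - c) i + ∑ i, c i = ∑ i, (c - c') i + ∑ i, c' i := by
    simp only [← Finset.sum_add_distrib, Pi.sub_apply, tsub_add_eq_max, max_comm]
  refine h.imp (fun _ => by omega) fun ⟨_, i, hlt, hi⟩ => ⟨by omega, i, fun j hj => ?_, ?_⟩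
  · change c' j - c j = c j - c' j
    rw [show c' j = c j from hlt j hj]
  · change c' i - c i < c i - c' i
    have : c' i < c i := hi
    omega

theorem Precedes.sum_le (h : Precedes e d) : ∑ i, d i ≤ ∑ i, e i := by
  rcases h with h | h <;> omega

end LexExponents

section CyclePowers

variable {n : ℕ} [NeZero n] {w c d : Fin n → ℕ} {t : ℕ} {a b : Fin n →₀ ℕ} {p : Fin n}

/-- The exponent vector of the product `∏ L_i ^ c_i` of the generators of the edge ideal. -/
def powExponent (w c : Fin n → ℕ) : Fin n →₀ ℕ :=
  ∑ i, c i • cycE n w i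

theorem powExponent_add (w c d : Fin n → ℕ) :
    powExponent w (c + d) = powExponent w c + powExponent w d := by
  simp only [powExponent, Pi.add_apply, add_smul, Finset.sum_add_distrib]

theorem powExponent_single (w : Fin n → ℕ) (p : Fin n) (v : ℕ) :
    powExponent w (Pi.single p v) = v • cycE n w p := by
  rw [powExponent, Finset.sum_eq_single p]
  · rw [Pi.single_eq_same]
  · intro q _ hq
    rw [Pi.single_eq_of_ne hq, zero_smul]
  · exact fun h => absurd (Finset.mem_univ p) h

theorem powExponent_mono (h : d ≤ c) : powExponent w d ≤ powExponent w c := by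
  rw [← tsub_add_cancel_of_le h, powExponent_add]
  exact le_add_self

theorem powExponent_apply (w c : Fin n → ℕ) (p : Fin n) :
    powExponent w c p = w p * c p + c (p + 1) := by
  have hpred : ∀ i, i - 1 = p ↔ i = p + 1 := fun i => sub_eq_iff_eq_add
  simp only [powExponent, cycE, Finsupp.finsetSum_apply, Finsupp.smul_apply, Finsupp.add_apply,
    Finsupp.single_apply, smul_eq_mul, hpred, mul_add, Finset.sum_add_distrib, mul_ite, mul_one,
    mul_zero, Finset.sum_ite_eq', Finset.mem_univ, if_true]
  ring

theorem degree_cycE (w : Fin n → ℕ) (i : Fin n) : (cycE n w i).degree = w i + 1 := by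
  rw [cycE, map_add, Finsupp.degree_single, Finsupp.degree_single, add_comm]

theorem degree_powExponent (w c : Fin n → ℕ) :
    (powExponent w c).degree = ∑ i, c i * (w i + 1) := by
  simp only [powExponent, map_sum, map_nsmul, degree_cycE, smul_eq_mul]

theorem degree_powExponent_le {W : ℕ} (hW : ∀ i, w i ≤ W) :
    (powExponent w c).degree ≤ (∑ i, c i) * (W + 1) := by
  rw [degree_powExponent, Finset.sum_mul]
  gcongr with i
  exact hW i

/-- A factor `L_p` contributes `W - w p` less to the degree than the bound accounts for. -/
theorem degree_powExponent_add_le {W : ℕ} (hW : ∀ i, w i ≤ W) (hp : 1 ≤ c p) :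
    (powExponent w c).degree + (W - w p) ≤ (∑ i, c i) * (W + 1) := by
  obtain ⟨c, rfl⟩ := exists_add_of_le (pi_single_le hp)
  have hrest := degree_powExponent_le (c := c) hW
  have hp := hW p
  simp only [powExponent_add, powExponent_single, one_smul, map_add, degree_cycE, Pi.add_apply,
    Finset.sum_add_distrib, Finset.sum_pi_single', Finset.mem_univ, if_true, add_mul, one_mul]
  omega

/-- The exponent vectors of the monomials in the `t`-th power of the edge ideal. -/
def powUpperSet (w : Fin n → ℕ) (t : ℕ) : UpperSet (Fin n →₀ ℕ) :=
  (Finset.piAntidiag Finset.univ t).inf fun c => UpperSet.Ici (powExponent w c)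

theorem mem_powUpperSet : a ∈ powUpperSet w t ↔ ∃ c, ∑ i, c i = t ∧ powExponent w c ≤ a := by
  simp only [powUpperSet, mem_inf_Ici, Finset.mem_piAntidiag, Finset.mem_univ, implies_true,
    and_true]

/-- The colon ideal `(I ^ (t + 1) + (L ^ c' : |c'| = t, c' < c)) : L ^ c`, where `t = |c|` and the
exponents `c'` are compared lexicographically. -/
def powColon (w c : Fin n → ℕ) : UpperSet (Fin n →₀ ℕ) where
  carrier := {b | ∃ c', Precedes c' c ∧ powExponent w c' ≤ b + powExponent w c}
  upper' := fun _ _ hab ⟨c', hc, h⟩ => ⟨c', hc, h.trans (add_le_add_left hab _)⟩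

theorem mem_powColon :
    b ∈ powColon w c ↔ ∃ c', Precedes c' c ∧ powExponent w c' ≤ b + powExponent w c :=
  Iff.rfl

theorem mem_powColon_of_le (hdc : d ≤ c) (hb : b ∈ powColon w d) : b ∈ powColon w c := by
  obtain ⟨e, hed, hle⟩ := mem_powColon.1 hb
  refine mem_powColon.2 ⟨c - d + e, ?_, ?_⟩
  · simpa only [tsub_add_cancel_of_le hdc] using hed.add_left (c - d)
  · rw [← tsub_add_cancel_of_le hdc, powExponent_add, powExponent_add, add_left_comm,
      tsub_add_cancel_of_le hdc]
    exact add_le_add_right hle _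

theorem cycE_mem_powColon (w c : Fin n → ℕ) (p : Fin n) : cycE n w p ∈ powColon w c := by
  refine mem_powColon_of_le (fun _ => Nat.zero_le _)
    (mem_powColon.2 ⟨Pi.single p 1, Or.inl (by simp), ?_⟩)
  rw [powExponent_single, one_smul]
  exact le_self_add

section

variable (hw : ∀ i, 2 ≤ w i)
include hw

theorem single_mem_powColon (hp : p ≠ 0) (hc : 1 ≤ c (p - 1)) :
    Finsupp.single p (w p) ∈ powColon w c := by
  refine mem_powColon_of_le (pi_single_le hc) (mem_powColon.2 ⟨Pi.single p 1, ?_, ?_⟩)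
  · have hlt : p - 1 < p := by
      obtain ⟨m, rfl⟩ := Nat.exists_eq_succ_of_ne_zero (NeZero.ne n)
      exact Fin.sub_one_lt_iff.2 (Fin.pos_of_ne_zero hp)
    refine Or.inr ⟨by simp, p - 1, fun j hj => ?_, ?_⟩
    · change (Pi.single p 1 : Fin n → ℕ) j = (Pi.single (p - 1) 1 : Fin n → ℕ) j
      rw [Pi.single_eq_of_ne hj.ne, Pi.single_eq_of_ne (hj.trans hlt).ne]
    · change (Pi.single p 1 : Fin n → ℕ) (p - 1) < (Pi.single (p - 1) 1 : Fin n → ℕ) (p - 1)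
      rw [Pi.single_eq_of_ne hlt.ne, Pi.single_eq_same]
      exact one_pos
  · simp only [powExponent_single, one_smul, cycE]
    rw [add_comm]
    exact add_le_add_right (le_add_left
      (Finsupp.single_le_single.2 (one_le_two.trans (hw (p - 1))))) _

theorem single_zero_mem_powColon (hc : 1 ≤ c (-1)) :
    Finsupp.single 0 (2 * w 0) ∈ powColon w c := by
  refine mem_powColon_of_le (pi_single_le hc)
    (mem_powColon.2 ⟨Pi.single 0 2, Or.inl (by simp), ?_⟩)
  simp only [powExponent_single, one_smul, cycE, smul_add, Finsupp.smul_single, smul_eq_mul,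
    mul_one, zero_sub]
  rw [add_comm]
  exact add_le_add_right (le_add_left (Finsupp.single_le_single.2 (hw _))) _

theorem single_add_single_mem_powColon (hc : 1 ≤ c (-1)) :
    Finsupp.single (-3) 1 + Finsupp.single (-2) (w (-2) - 1) + Finsupp.single 0 (w 0) ∈
      powColon w c := by
  refine mem_powColon_of_le (pi_single_le hc)
    (mem_powColon.2 ⟨Pi.single 0 1 + Pi.single (-2) 1, Or.inl (by simp [Finset.sum_add_distrib]),
      ?_⟩)
  have h2 : (-1 : Fin n) - 1 = -2 := by grind
  have h3 : (-2 : Fin n) - 1 = -3 := by grind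
  simp only [powExponent_add, powExponent_single, one_smul, cycE, zero_sub, h2, h3]
  have hsplit : Finsupp.single (-2 : Fin n) (w (-2)) =
      Finsupp.single (-2) (w (-2) - 1) + Finsupp.single (-2) 1 := by
    rw [← Finsupp.single_add, Nat.sub_add_cancel (one_le_two.trans (hw _))]
  have hle : Finsupp.single (-1 : Fin n) 1 ≤ Finsupp.single (-1) (w (-1)) :=
    Finsupp.single_le_single.2 (one_le_two.trans (hw _))
  refine (Eq.le ?_).trans (add_le_add_right (add_le_add_right hle _) _)
  rw [hsplit]
  abel

end

end CyclePowers

section ColonStructure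

variable {n : ℕ} [NeZero n] {w c d e v : Fin n → ℕ} {b : Fin n →₀ ℕ} {p : Fin n}

theorem Precedes.sum_eq_of_apply_zero (h : Precedes e d) (hd : d 0 = 0) (he : e 0 ≠ 0) :
    ∑ i, e i = ∑ i, d i + 1 := by
  rcases h with h | ⟨-, i, heq, hlt⟩
  · exact h
  · exfalso
    have heq' : ∀ j < i, e j = d j := heq
    have hlt' : e i < d i := hlt
    rcases eq_or_ne i 0 with rfl | hi
    · omega
    · exact he ((heq' 0 (Fin.pos_iff_ne_zero.2 hi)).trans hd)

theorem le_and_le_or_lt_of_lt {v x y x' y' z : ℕ} (hz : 2 ≤ z) (hxy : x = 0 ∨ y = 0)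
    (hlt : x = 0 ∨ z * x + x' < (v + 1) * z + (z * y + y')) :
    x ≤ y' + v ∧ (x ≤ v + 1 ∨ x < y' + v) := by
  rcases le_or_gt x v with hv | hv
  · omega
  obtain ⟨m, rfl⟩ := Nat.exists_eq_add_of_lt hv
  obtain rfl : y = 0 := by omega
  have hexpand : z * (v + m + 1) = (v + 1) * z + z * m := by ring
  have hm : 2 * m ≤ z * m := Nat.mul_le_mul_right m hz
  omega

section

variable (hw : ∀ i, 2 ≤ w i) (hdisj : ∀ p, e p = 0 ∨ d p = 0)
include hw hdisj

/-- The bounds on the exponents force `e p ≤ d (p + 1) + v p`, strictly if `e p > v p + 1`; since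
the right-hand sides have the smaller sum, equality holds throughout. -/
theorem apply_le_add_one
    (hlt : ∀ p, e p = 0 ∨ powExponent w e p < (v p + 1) * w p + powExponent w d p)
    (hsum : ∑ p, d p + ∑ p, v p ≤ ∑ p, e p) (p : Fin n) : e p ≤ v p + 1 := by
  simp only [powExponent_apply] at hlt
  have hbound q := le_and_le_or_lt_of_lt (hw q) (hdisj q) (hlt q)
  by_contra hp
  have hstrict : ∑ q, e q < ∑ q, (d (q + 1) + v q) :=
    Finset.sum_lt_sum (fun q _ => (hbound q).1) ⟨p, Finset.mem_univ p, (hbound p).2.resolve_left hp⟩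
  have hshift : ∑ q, d (q + 1) = ∑ q, d q := Equiv.sum_comp (Equiv.addRight 1) d
  rw [Finset.sum_add_distrib, hshift] at hstrict
  omega

theorem powExponent_lt_of_forall
    (hlt : ∀ p, e p = 0 ∨ powExponent w e p < w p + powExponent w d p)
    (hsum : ∑ p, d p ≤ ∑ p, e p) (p : Fin n) : powExponent w e p < w p + powExponent w d p := by
  have hle := apply_le_add_one (v := 0) hw hdisj (by simpa using hlt) (by simpa using hsum) (p + 1)
  refine (hlt p).elim (fun hp => ?_) id
  simp only [powExponent_apply, hp, Pi.zero_apply] at hle ⊢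
  have := hw p
  omega

theorem powExponent_lt_of_forall_ne_zero
    (hlt : ∀ p, p ≠ 0 → e p = 0 ∨ powExponent w e p < w p + powExponent w d p)
    (hlt_zero : powExponent w e 0 < 2 * w 0 + powExponent w d 0) (hd : d (-1) ≠ 0)
    (hsum : ∑ p, d p + 1 ≤ ∑ p, e p) (hp : p ≠ 0) :
    powExponent w e p < w p + powExponent w d p := by
  have hle := apply_le_add_one (v := Pi.single 0 1) hw hdisj (fun q => ?_) (by simpa using hsum)
    (p + 1)
  · refine (hlt p hp).elim (fun hep => ?_) id
    have hwp := hw p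
    simp only [powExponent_apply, hep, mul_zero, zero_add]
    rcases eq_or_ne (p + 1) 0 with hp1 | hp1
    · obtain rfl : p = -1 := eq_neg_of_add_eq_zero_left hp1
      rw [hp1, Pi.single_eq_same] at hle
      have : w (-1) * 1 ≤ w (-1) * d (-1) := Nat.mul_le_mul_left _ (Nat.pos_of_ne_zero hd)
      rw [hp1]
      omega
    · rw [Pi.single_eq_of_ne hp1] at hle
      omega
  · rcases eq_or_ne q 0 with rfl | hq
    · rw [Pi.single_eq_same]
      exact Or.inr hlt_zero
    · rw [Pi.single_eq_of_ne hq, zero_add, one_mul]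
      exact hlt q hq

end

/-- The shape of the generators of `powColon w c`: up to a factor `x_0 ^ w_0`, which can occur only
if `L_{-1}` divides `L ^ c`, their exponents are almost below `w`. -/
def ColonGenerator (w c : Fin n → ℕ) (b : Fin n →₀ ℕ) : Prop :=
  AlmostBelow w b ∨
    1 ≤ c (-1) ∧ Finsupp.single 0 (w 0) ≤ b ∧ AlmostBelow w (b - Finsupp.single 0 (w 0))

theorem sub_one_ne (hn : 2 ≤ n) (p : Fin n) : p - 1 ≠ p := by
  have : NeZero (1 : Fin n) := ⟨by rw [Ne, Fin.one_eq_zero_iff]; omega⟩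
  simp

theorem AlmostBelow.cycE (hn : 2 ≤ n) (hw : ∀ i, 2 ≤ w i) (p : Fin n) :
    AlmostBelow w (cycE n w p) := by
  refine .of_forall_ne (p := p) (by simp [PaperReg.cycE, sub_one_ne hn]) fun q hq => ?_
  have := hw q
  rw [PaperReg.cycE, Finsupp.add_apply, Finsupp.single_eq_of_ne hq, add_zero, Finsupp.single_apply]
  split_ifs <;> omega

theorem cycE_le (hn : 2 ≤ n) (hpred : b (p - 1) ≠ 0) (hp : w p ≤ b p) : cycE n w p ≤ b := by
  intro q
  rw [cycE, Finsupp.add_apply]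
  rcases eq_or_ne q p with rfl | hq
  · rwa [Finsupp.single_eq_of_ne (sub_one_ne hn q).symm, zero_add, Finsupp.single_eq_same]
  · rw [Finsupp.single_eq_of_ne hq, add_zero]
    exact Finsupp.single_le_iff.2 (Nat.one_le_iff_ne_zero.2 hpred) q

section

variable (hn : 2 ≤ n) (hw : ∀ i, 2 ≤ w i)
include hn hw

theorem exists_almostBelow_le_of_apply_le (hdisj : ∀ p, e p = 0 ∨ d p = 0)
    (hb : powExponent w e ≤ b + powExponent w d) (hep : e p ≠ 0)
    (hp : w p + powExponent w d p ≤ powExponent w e p) (hp_zero : p = 0 → d (-1) = 0) :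
    ∃ b' ∈ powColon w d, b' ≤ b ∧ AlmostBelow w b' := by
  have hwp : w p ≤ b p := by
    have : powExponent w e p ≤ b p + powExponent w d p := hb p
    omega
  by_cases hdp : d (p - 1) = 0
  · refine ⟨_, cycE_mem_powColon w d p, cycE_le hn ?_ hwp, .cycE hn hw p⟩
    have hpred : powExponent w e (p - 1) ≤ b (p - 1) + powExponent w d (p - 1) := hb (p - 1)
    have := (hdisj p).resolve_left hep
    simp only [powExponent_apply, sub_add_cancel, hdp] at hpred
    omega
  · have hp0 : p ≠ 0 := by
      rintro rfl
      exact hdp (by rw [zero_sub]; exact hp_zero rfl)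
    exact ⟨_, single_mem_powColon hw hp0 (Nat.one_le_iff_ne_zero.2 hdp),
      Finsupp.single_le_iff.2 hwp, .single (fun q => one_le_two.trans (hw q)) le_rfl⟩

omit hn in
theorem exists_colonGenerator_le_of_apply_zero (hdisj : ∀ p, e p = 0 ∨ d p = 0)
    (hed : Precedes e d) (hb : powExponent w e ≤ b + powExponent w d) (he : e 0 ≠ 0)
    (hd : d (-1) ≠ 0) (hzero : w 0 + powExponent w d 0 ≤ powExponent w e 0)
    (hlt : ∀ p, p ≠ 0 → e p = 0 ∨ powExponent w e p < w p + powExponent w d p) :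
    ∃ b' ∈ powColon w d, b' ≤ b ∧ ColonGenerator w d b' := by
  have hsum := hed.sum_eq_of_apply_zero ((hdisj 0).resolve_left he) he
  have hw0 := hw 0
  by_cases hsq : powExponent w e 0 < 2 * w 0 + powExponent w d 0
  · refine ⟨powExponent w e - powExponent w d, mem_powColon.2 ⟨e, hed, le_tsub_add⟩,
      tsub_le_iff_right.2 hb, Or.inr ⟨Nat.one_le_iff_ne_zero.2 hd, ?_, .of_forall_lt fun q => ?_⟩⟩
    · rw [Finsupp.single_le_iff, Finsupp.tsub_apply]
      omega
    · rw [Finsupp.tsub_apply, Finsupp.tsub_apply]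
      rcases eq_or_ne q 0 with rfl | hq
      · rw [Finsupp.single_eq_same]
        omega
      · have := powExponent_lt_of_forall_ne_zero hw hdisj hlt hsq hd hsum.ge hq
        have := hw q
        omega
  · have hb0 : powExponent w e 0 ≤ b 0 + powExponent w d 0 := hb 0
    refine ⟨_, single_zero_mem_powColon hw (Nat.one_le_iff_ne_zero.2 hd),
      Finsupp.single_le_iff.2 (by omega), Or.inr ⟨Nat.one_le_iff_ne_zero.2 hd,
        Finsupp.single_le_single.2 (by omega), ?_⟩⟩
    rw [← Finsupp.single_tsub]
    exact .single (fun q => one_le_two.trans (hw q)) (by omega)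

theorem exists_colonGenerator_le_of_disjoint (hdisj : ∀ p, e p = 0 ∨ d p = 0)
    (hed : Precedes e d) (hb : powExponent w e ≤ b + powExponent w d) :
    ∃ b' ∈ powColon w d, b' ≤ b ∧ ColonGenerator w d b' := by
  by_cases hlt : ∀ p, e p = 0 ∨ powExponent w e p < w p + powExponent w d p
  · refine ⟨powExponent w e - powExponent w d, mem_powColon.2 ⟨e, hed, le_tsub_add⟩,
      tsub_le_iff_right.2 hb, Or.inl (.of_forall_lt fun q => ?_)⟩
    have := powExponent_lt_of_forall hw hdisj hlt hed.sum_le q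
    have := hw q
    rw [Finsupp.tsub_apply]
    omega
  by_cases hexc : ∃ p, e p ≠ 0 ∧ w p + powExponent w d p ≤ powExponent w e p ∧
    (p = 0 → d (-1) = 0)
  · obtain ⟨p, hep, hp, hp_zero⟩ := hexc
    obtain ⟨b', hb', hle, hwb⟩ := exists_almostBelow_le_of_apply_le hn hw hdisj hb hep hp hp_zero
    exact ⟨b', hb', hle, Or.inl hwb⟩
  · push Not at hlt hexc
    obtain ⟨p, hep, hp⟩ := hlt
    obtain ⟨rfl, hd⟩ := hexc p hep hp
    refine exists_colonGenerator_le_of_apply_zero hw hdisj hed hb hep hd hp fun q hq => ?_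
    by_contra! h
    exact hq (hexc q h.1 h.2).1

theorem exists_colonGenerator_le (hb : b ∈ powColon w c) :
    ∃ b' ∈ powColon w c, b' ≤ b ∧ ColonGenerator w c b' := by
  obtain ⟨c', hc', hle⟩ := mem_powColon.1 hb
  have hmax : c' - c + c = c - c' + c' := by
    ext p
    simp only [Pi.add_apply, Pi.sub_apply, tsub_add_eq_max, max_comm]
  have hdisj p : (c' - c) p = 0 ∨ (c - c') p = 0 := by
    simp only [Pi.sub_apply]
    omega
  have hsub : powExponent w (c' - c) ≤ b + powExponent w (c - c') := by
    rw [← add_le_add_iff_right (powExponent w c), ← powExponent_add, hmax, powExponent_add,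
      add_right_comm, add_comm]
    exact add_le_add_left hle _
  obtain ⟨b', hb', hle', hgen⟩ :=
    exists_colonGenerator_le_of_disjoint hn hw hdisj hc'.tsub hsub
  refine ⟨b', mem_powColon_of_le tsub_le_self hb', hle', hgen.imp_right fun h => ⟨?_, h.2⟩⟩
  exact h.1.trans (Nat.sub_le _ _)

end

end ColonStructure

section PowerRegularity

variable {R : Type} [CommRing R] {n : ℕ} [NeZero n] {w c : Fin n → ℕ} {t W : ℕ}

theorem AlmostBelow.of_le {σ : Type} {w : σ → ℕ} {b b' : σ →₀ ℕ} (h : AlmostBelow w b)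
    (hle : b' ≤ b) : AlmostBelow w b' :=
  h.transfer fun p => by
    have := h.le p
    have := hle p
    omega

theorem powUpperSet_succ_le (w : Fin n → ℕ) (t : ℕ) : powUpperSet w t ≤ powUpperSet w (t + 1) := by
  intro a ha
  obtain ⟨c, hc, hle⟩ := mem_powUpperSet.1 ha
  obtain ⟨p, -, hp⟩ : ∃ p ∈ Finset.univ, c p ≠ 0 :=
    Finset.exists_ne_zero_of_sum_ne_zero (hc.trans_ne t.succ_ne_zero)
  obtain ⟨c, rfl⟩ := exists_add_of_le (pi_single_le (Nat.one_le_iff_ne_zero.2 hp))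
  refine mem_powUpperSet.2 ⟨c, ?_, (powExponent_mono le_add_self).trans hle⟩
  simpa [Finset.sum_add_distrib, add_comm 1] using hc

theorem powUpperSet_inf_lexCompositions (w : Fin n → ℕ) (t : ℕ) :
    (powUpperSet w (t + 1) ⊓ (lexCompositions n t).inf fun x =>
      UpperSet.Ici (powExponent w (ofLex x))) = powUpperSet w t := by
  have hinf : ((lexCompositions n t).inf fun x => UpperSet.Ici (powExponent w (ofLex x))) =
      powUpperSet w t := Finset.inf_map _ _ _
  rw [hinf, inf_eq_right]
  exact powUpperSet_succ_le w t

theorem colon_inf_lexCompositions (w : Fin n → ℕ) {s : Finset (Lex (Fin n → ℕ))}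
    {x : Lex (Fin n → ℕ)} (hx : x ∈ lexCompositions n t)
    (hs : ∀ y, y ∈ s ↔ y ∈ lexCompositions n t ∧ y < x) :
    colon (powUpperSet w (t + 1) ⊓ s.inf fun y => UpperSet.Ici (powExponent w (ofLex y)))
      (powExponent w (ofLex x)) = powColon w (ofLex x) := by
  obtain rfl := mem_lexCompositions.1 hx
  ext b
  simp only [SetLike.mem_coe, mem_colon, UpperSet.mem_inf_iff, mem_powUpperSet, mem_inf_Ici,
    hs, mem_lexCompositions, mem_powColon, Precedes, or_and_right, exists_or, toLex_ofLex,
    toLex.surjective.exists, ofLex_toLex]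

namespace MonomialRegLE

variable (hn : 3 ≤ n) (hw : ∀ i, 2 ≤ w i)
include hn hw

theorem powColon_of_apply_eq_zero (hc : c (-1) = 0) :
    MonomialRegLE R (powColon w c) (∑ p, (w p - 1) + 1) := by
  refine of_generatedAlmostBelow (fun p => one_le_two.trans (hw p)) fun b hb => ?_
  obtain ⟨b', hb', hle, hgen | ⟨hc', -⟩⟩ := exists_colonGenerator_le (by omega) hw hb
  · exact ⟨b', hb', hle, hgen⟩
  · omega

/-- After dividing by `x_0 ^ w_0`, the colon ideal contains `x_{-1}` and a generator supported on
`x_{-3}` and `x_{-2}`, which makes up for the degree of `x_0 ^ w_0`. -/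
theorem colon_powColon (hc : 1 ≤ c (-1)) :
    MonomialRegLE R (colon (powColon w c) (Finsupp.single 0 (w 0)))
      (∑ p, (Function.update w (-1) 1 p - 1)) := by
  have hgen : GeneratedAlmostBelow w (colon (powColon w c) (Finsupp.single 0 (w 0))) := by
    intro b hb
    obtain ⟨b', hb', hle, hgen⟩ := exists_colonGenerator_le (by omega) hw hb
    refine ⟨b' - Finsupp.single 0 (w 0), (powColon w c).upper le_tsub_add hb',
      tsub_le_iff_right.2 hle, hgen.elim (fun h => h.of_le tsub_le_self) fun h => h.2.2⟩
  have hmem : Finsupp.single (-1) 1 ∈ colon (powColon w c) (Finsupp.single 0 (w 0)) := by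
    simpa only [cycE, zero_sub, mem_colon] using cycE_mem_powColon w c 0
  have h1 : (1 : Fin n) ≠ 0 := by
    rw [Ne, Fin.one_eq_zero_iff]
    omega
  have h2 : (2 : Fin n) ≠ 0 := by
    simp [Fin.ext_iff, Nat.mod_eq_of_lt (show 2 < n by omega)]
  have h12 : (-2 : Fin n) ≠ -1 := fun h => h1 (by open Fin.CommRing in linear_combination -h)
  have h23 : (-3 : Fin n) ≠ -2 := fun h => h1 (by open Fin.CommRing in linear_combination -h)
  have h13 : (-3 : Fin n) ≠ -1 := fun h => h2 (by open Fin.CommRing in linear_combination -h)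
  have hw1 : ∀ p, 1 ≤ w p := fun p => one_le_two.trans (hw p)
  refine of_generatedAlmostBelow_of_mem (p := -3) (q := -2) (one_le_update hw1 le_rfl)
    (hgen.update hw1 hmem) h23 ?_ ?_ ?_
  · rw [Function.update_of_ne h13]
    exact hw _
  · rw [Function.update_of_ne h12]
    exact hw _
  · rw [Function.update_of_ne h12]
    exact single_add_single_mem_powColon hw hc

theorem powColon_of_one_le (hW : ∀ i, w i ≤ W) (hc : 1 ≤ c (-1)) :
    MonomialRegLE R (powColon w c) (∑ p, (w p - 1) + 1 + (W - w (-1))) := by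
  have hgen : GeneratedAlmostBelow w (powColon w c ⊓ UpperSet.Ici (Finsupp.single 0 (w 0))) := by
    have hsingle : AlmostBelow w (Finsupp.single 0 (w 0)) :=
      .single (fun p => one_le_two.trans (hw p)) le_rfl
    rintro b (hb | hb)
    · obtain ⟨b', hb', hle, hgen | ⟨-, hle', -⟩⟩ := exists_colonGenerator_le (by omega) hw hb
      · exact ⟨b', Or.inl hb', hle, hgen⟩
      · exact ⟨_, self_mem_inf_Ici, hle'.trans hle, hsingle⟩
    · exact ⟨_, self_mem_inf_Ici, hb, hsingle⟩
  have hsum := sum_update_sub_one w (-1) 1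
  have := hw (-1)
  have := hW (-1)
  have := hW 0
  refine of_colon_of_inf (colon_powColon hn hw hc) ?_
    ((of_generatedAlmostBelow (fun p => one_le_two.trans (hw p)) hgen).mono (by omega))
  rw [Finsupp.degree_single]
  omega

theorem powUpperSet_succ_of_powUpperSet (hW : ∀ i, w i ≤ W)
    (h : MonomialRegLE R (powUpperSet w t) (∑ p, (w p - 1) + 1 + t * (W + 1))) :
    MonomialRegLE R (powUpperSet w (t + 1)) (∑ p, (w p - 1) + 1 + t * (W + 1)) := by
  refine of_chain (lexCompositions n t) (fun x => powExponent w (ofLex x)) (fun x hx => ?_) ?_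
  · rw [colon_inf_lexCompositions w hx ?_]
    swap
    · exact fun y => @Finset.mem_filter _ _ _ _ _
    obtain rfl := mem_lexCompositions.1 hx
    rcases Nat.eq_zero_or_pos (ofLex x (-1)) with hc | hc
    · refine ⟨_, ?_, powColon_of_apply_eq_zero hn hw hc⟩
      exact Nat.add_le_add_left (degree_powExponent_le hW) _
    · refine ⟨_, ?_, powColon_of_one_le hn hw hW hc⟩
      have := degree_powExponent_add_le hW hc
      omega
  · rwa [powUpperSet_inf_lexCompositions]

theorem powUpperSet_succ (hW : ∀ i, w i ≤ W) (t : ℕ) :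
    MonomialRegLE R (powUpperSet w (t + 1)) (∑ p, (w p - 1) + 1 + t * (W + 1)) := by
  induction t with
  | zero =>
    refine powUpperSet_succ_of_powUpperSet hn hw hW (of_zero_mem (mem_powUpperSet.2 ⟨0, ?_, ?_⟩) _)
    · simp
    · simp [powExponent]
  | succ t ih => exact powUpperSet_succ_of_powUpperSet hn hw hW (ih.mono (by gcongr; omega))

end MonomialRegLE

end PowerRegularity

section FreeComplexes

variable {R : Type} [CommRing R] {σ : Type}

variable (R σ) in
/-- A complex of finite graded free modules which is exact except possibly in position zero. -/
structure FreeComplex where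
  ι : ℕ → Type
  [fintype : ∀ i, Fintype (ι i)]
  deg : ∀ i, ι i → ℕ
  d : ∀ i, GradedMod.free R σ (deg (i + 1)) →ₗ[MvPolynomial σ R] GradedMod.free R σ (deg i)
  d_mem : ∀ i {D v}, v ∈ (GradedMod.free R σ (deg (i + 1))).gr D →
    d i v ∈ (GradedMod.free R σ (deg i)).gr D
  exact : ∀ i, Function.Exact (d (i + 1)) (d i)

attribute [instance] FreeComplex.fintype

/-- Splice a map `f` whose kernel is the image of the first differential onto a complex. -/
def FreeComplex.cons (C : FreeComplex R σ) {ι : Type} [Fintype ι] (deg : ι → ℕ)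
    (f : GradedMod.free R σ (C.deg 0) →ₗ[MvPolynomial σ R] GradedMod.free R σ deg)
    (hf : ∀ {D v}, v ∈ (GradedMod.free R σ (C.deg 0)).gr D → f v ∈ (GradedMod.free R σ deg).gr D)
    (hexact : Function.Exact (C.d 0) f) : FreeComplex R σ where
  ι
    | 0 => ι
    | i + 1 => C.ι i
  fintype
    | 0 => inferInstance
    | i + 1 => C.fintype i
  deg
    | 0 => deg
    | i + 1 => C.deg i
  d
    | 0 => f
    | i + 1 => C.d i
  d_mem
    | 0 => hf
    | i + 1 => C.d_mem i
  exact
    | 0 => hexact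
    | i + 1 => C.exact i

/-- A graded free resolution of `M`, of possibly infinite length. -/
structure FreeResolution (M : GradedMod R σ) extends FreeComplex R σ where
  aug : GradedMod.free R σ (deg 0) →ₗ[MvPolynomial σ R] M
  surjective : Function.Surjective aug
  aug_mem : ∀ {D v}, v ∈ (GradedMod.free R σ (deg 0)).gr D → aug v ∈ M.gr D
  exact_zero : Function.Exact (d 0) aug

/-- The zero resolution of the zero module. -/
def FreeResolution.zero (M : GradedMod R σ) [Subsingleton M] : FreeResolution M where
  ι _ := Empty
  deg _ _ := 0
  d _ := 0
  d_mem _ _ _ _ := AddSubgroup.zero_mem _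
  exact _ _ := ⟨fun _ => ⟨0, Subsingleton.elim _ _⟩, fun _ => rfl⟩
  aug := 0
  surjective _ := ⟨0, Subsingleton.elim _ _⟩
  aug_mem _ := AddSubgroup.zero_mem _
  exact_zero _ := ⟨fun _ => ⟨0, Subsingleton.elim _ _⟩, fun _ => rfl⟩

/-- The resolution obtained by splicing a free cover and a resolution of its kernel. -/
def FreeResolution.cons {M : GradedMod R σ} (c : FreeCover M) (F : FreeResolution c.kernel) :
    FreeResolution M where
  toFreeComplex := F.toFreeComplex.cons c.deg ((LinearMap.ker c.map).subtype ∘ₗ F.aug)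
    (fun hv => F.aug_mem hv) <|
      F.exact_zero.comp_injective _ (Submodule.subtype_injective _) (map_zero _)
  aug := c.map
  surjective := c.isGradedSurj.surjective
  aug_mem := c.isGradedSurj.map_mem
  exact_zero := by
    have h : Function.Exact ((LinearMap.ker c.map).subtype ∘ₗ F.aug) c.map :=
      F.surjective.comp_exact_iff_exact.2 (LinearMap.exact_subtype_ker_map c.map)
    exact h

theorem HasResolution.exists_freeResolution {p : ℕ} {M : GradedMod R σ} {r : ℕ}
    (h : HasResolution p M r) : ∃ F : FreeResolution M, ∀ i b, F.deg i b ≤ r + i := by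
  induction p generalizing M r with
  | zero =>
    have : Subsingleton M := h
    exact ⟨.zero M, fun i b => b.elim⟩
  | succ p ih =>
    obtain ⟨c, hc, hker⟩ := h
    obtain ⟨F, hF⟩ := ih hker
    refine ⟨.cons c F, fun i => ?_⟩
    cases i with
    | zero => exact hc
    | succ i => exact fun b => (hF i b).trans_eq (by omega)

end FreeComplexes

section GradedFreeRes

variable {k : Type} [Field k] {σ : Type} {I : Ideal (MvPolynomial σ k)}

/-- The standard basis of a finite free module, enumerated by `Fin`. -/
def finBasis (ι : Type) [Fintype ι] :
    Module.Basis (Fin (Fintype.card ι)) (MvPolynomial σ k) (ι → MvPolynomial σ k) :=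
  (Pi.basisFun (MvPolynomial σ k) ι).reindex (Fintype.equivFin ι)

theorem finBasis_repr_apply {ι : Type} [Fintype ι] (v : ι → MvPolynomial σ k)
    (j : Fin (Fintype.card ι)) : (finBasis ι).repr v j = v ((Fintype.equivFin ι).symm j) := by
  rw [finBasis, Module.Basis.repr_reindex_apply, Pi.basisFun_repr]

theorem finBasis_repr_symm_single_mem {ι : Type} [Fintype ι] (deg : ι → ℕ)
    (j : Fin (Fintype.card ι)) : (finBasis (k := k) (σ := σ) ι).repr.symm (Finsupp.single j 1) ∈
      (GradedMod.free k σ deg).gr (deg ((Fintype.equivFin ι).symm j)) := by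
  classical
  rw [finBasis, Module.Basis.repr_symm_single_one, Module.Basis.reindex_apply, Pi.basisFun_apply]
  exact GradedMod.single_mem_free deg _

section ArrowCongr

variable {S A B C A' B' C' : Type} [CommRing S] [AddCommGroup A] [AddCommGroup B] [AddCommGroup C]
  [AddCommGroup A'] [AddCommGroup B'] [AddCommGroup C'] [Module S A] [Module S B] [Module S C]
  [Module S A'] [Module S B'] [Module S C'] {f : A →ₗ[S] B} {g : B →ₗ[S] C}

theorem exact_arrowCongr (h : Function.Exact f g) (a : A ≃ₗ[S] A') (b : B ≃ₗ[S] B')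
    (c : C ≃ₗ[S] C') : Function.Exact (a.arrowCongr b f) (b.arrowCongr c g) := by
  refine Function.Exact.of_ladder_linearEquiv_of_exact (e₁ := a) (e₂ := b) (e₃ := c) ?_ ?_ h <;>
  · ext x
    simp only [LinearMap.comp_apply, LinearEquiv.coe_coe, LinearEquiv.arrowCongr_apply,
      LinearEquiv.symm_apply_apply]

end ArrowCongr

/-- A graded free resolution of an ideal with its basis elements enumerated by `Fin`. -/
def FreeResolution.toGradedFreeRes (F : FreeResolution (.ofIdeal I 0)) : GradedFreeRes k σ I where
  rk i := Fintype.card (F.ι i)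
  deg i b := F.deg i ((Fintype.equivFin _).symm b)
  aug := I.subtype ∘ₗ (finBasis _).repr.arrowCongr (LinearEquiv.refl _ I) F.aug
  d i := (finBasis _).repr.arrowCongr (finBasis _).repr (F.d i)
  aug_range := by
    rw [LinearMap.range_comp, LinearMap.range_eq_top.2, Submodule.map_top, Submodule.range_subtype]
    exact F.surjective.comp (finBasis _).repr.symm.surjective
  exact_zero := (LinearMap.exact_iff.1 <| (exact_arrowCongr F.exact_zero _ _ _).comp_injective _
    I.subtype_injective (map_zero _)).symm
  exact_succ i := (LinearMap.exact_iff.1 (exact_arrowCongr (F.exact i) _ _ _)).symm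
  aug_graded b := isHomogeneous_iff_mem_shiftedHomogeneous.2
    (F.aug_mem (finBasis_repr_symm_single_mem (F.deg 0) b))
  d_graded i b c := by
    rw [LinearEquiv.arrowCongr_apply, finBasis_repr_apply]
    exact mem_shiftedHomogeneous_iff.1 (GradedMod.mem_free.1
      (F.d_mem i (finBasis_repr_symm_single_mem (F.deg (i + 1)) b)) _)

theorem HasRegLE.exists_gradedFreeRes {r : ℕ} (h : HasRegLE (.ofIdeal I 0) r) :
    ∃ F : GradedFreeRes k σ I, ∀ i b, F.deg i b ≤ r + i := by
  obtain ⟨p, hp⟩ := h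
  obtain ⟨F, hF⟩ := hp.exists_freeResolution
  exact ⟨F.toGradedFreeRes, fun i b => hF i _⟩

namespace GradedFreeRes

variable (F : GradedFreeRes k σ I)

/-- The graded free resolution of an ideal as a complex of modules of functions, continued by the
inclusion of the ideal into the polynomial ring. -/
def toFreeComplex : FreeComplex k σ :=
  let e (m : ℕ) := Finsupp.linearEquivFunOnFinite (MvPolynomial σ k) (MvPolynomial σ k) (Fin m)
  let e₀ := (LinearEquiv.funUnique Unit (MvPolynomial σ k) (MvPolynomial σ k)).symm
  FreeComplex.cons
    { ι := fun i => Fin (F.rk i)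
      deg := F.deg
      d := fun i => (e _).arrowCongr (e _) (F.d i)
      d_mem := fun i => by
        refine map_mem_of_map_single_mem fun b => GradedMod.mem_free.2 fun c => ?_
        rw [LinearEquiv.arrowCongr_apply, Finsupp.linearEquivFunOnFinite_symm_single]
        exact mem_shiftedHomogeneous_iff.2 (F.d_graded i b c)
      exact := fun i => exact_arrowCongr (LinearMap.exact_iff.2 (F.exact_succ i).symm) _ _ _ }
    (fun _ : Unit => 0) ((e _).arrowCongr e₀ F.aug)
    (map_mem_of_map_single_mem fun b => GradedMod.mem_free.2 fun _ => by
      rw [LinearEquiv.arrowCongr_apply, Finsupp.linearEquivFunOnFinite_symm_single]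
      exact isHomogeneous_iff_mem_shiftedHomogeneous.1 (F.aug_graded b))
    (exact_arrowCongr (LinearMap.exact_iff.2 F.exact_zero.symm) _ _ _)

theorem exists_toFreeComplex_d_zero_eq {u : MvPolynomial σ k} :
    (∃ v, F.toFreeComplex.d 0 v = fun _ : Unit => u) ↔ u ∈ I := by
  rw [← SetLike.ext_iff.1 F.aug_range]
  refine ⟨fun ⟨v, hv⟩ => ⟨_, congrFun hv ()⟩, fun ⟨v, hv⟩ => ?_⟩
  refine ⟨Finsupp.linearEquivFunOnFinite (MvPolynomial σ k) (MvPolynomial σ k) (Fin (F.rk 0)) v,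
    funext fun _ => ?_⟩
  exact (congrArg F.aug (LinearEquiv.symm_apply_apply
    (Finsupp.linearEquivFunOnFinite (MvPolynomial σ k) (MvPolynomial σ k) (Fin (F.rk 0)))
    v)).trans hv

end GradedFreeRes

end GradedFreeRes

section HomogeneousComponents

variable {R : Type} [CommRing R] {σ : Type}

/-- The component of degree `D` of a polynomial when `1` is placed in degree `d`. -/
def shiftedComponent (d D : ℕ) : MvPolynomial σ R →+ MvPolynomial σ R :=
  if d ≤ D then (homogeneousComponent (D - d)).toAddMonoidHom else 0

theorem coeff_shiftedComponent (d D : ℕ) (p : MvPolynomial σ R) (a : σ →₀ ℕ) :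
    coeff a (shiftedComponent d D p) = if a.degree + d = D then coeff a p else 0 := by
  unfold shiftedComponent
  split_ifs with hd ha ha
  · exact (coeff_homogeneousComponent _ _ _).trans (if_pos (by omega))
  · exact (coeff_homogeneousComponent _ _ _).trans (if_neg (by omega))
  · omega
  · exact coeff_zero a

theorem shiftedComponent_mem (d D : ℕ) (p : MvPolynomial σ R) :
    shiftedComponent d D p ∈ shiftedHomogeneous R σ d D := by
  refine mem_shiftedHomogeneous.2 fun a ha => ?_
  rw [coeff_shiftedComponent] at ha
  exact (ite_ne_right_iff.1 ha).1

theorem shiftedComponent_of_mem {d D E : ℕ} {p : MvPolynomial σ R}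
    (hp : p ∈ shiftedHomogeneous R σ d E) :
    shiftedComponent d D p = if E = D then p else 0 := by
  ext a
  rw [coeff_shiftedComponent, apply_ite (coeff a), coeff_zero]
  by_cases ha : coeff a p = 0
  · simp only [ha, ite_self]
  · rw [mem_shiftedHomogeneous.1 hp a ha]

/-- The component of degree `D` of an element of a graded free module. -/
def freeComponent {ι : Type} (deg : ι → ℕ) (D : ℕ) :
    GradedMod.free R σ deg →+ GradedMod.free R σ deg :=
  AddMonoidHom.pi fun i => (shiftedComponent (deg i) D).comp (Pi.evalAddMonoidHom _ i)

theorem freeComponent_apply {ι : Type} (deg : ι → ℕ) (D : ℕ) (v : GradedMod.free R σ deg) (i : ι) :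
    freeComponent deg D v i = shiftedComponent (deg i) D (v i) := rfl

theorem freeComponent_mem {ι : Type} (deg : ι → ℕ) (D : ℕ) (v : GradedMod.free R σ deg) :
    freeComponent deg D v ∈ (GradedMod.free R σ deg).gr D :=
  GradedMod.mem_free.2 fun i => shiftedComponent_mem (deg i) D (v i)

theorem freeComponent_of_mem {ι : Type} {deg : ι → ℕ} {D E : ℕ} {v : GradedMod.free R σ deg}
    (hv : v ∈ (GradedMod.free R σ deg).gr E) : freeComponent deg D v = if E = D then v else 0 := by
  funext i
  rw [freeComponent_apply, shiftedComponent_of_mem (GradedMod.mem_free.1 hv i)]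
  split_ifs <;> rfl

theorem map_freeComponent {ι κ : Type} [Finite ι] {deg : ι → ℕ} {deg' : κ → ℕ}
    {f : GradedMod.free R σ deg →ₗ[MvPolynomial σ R] GradedMod.free R σ deg'}
    (hf : ∀ {D v}, v ∈ (GradedMod.free R σ deg).gr D → f v ∈ (GradedMod.free R σ deg').gr D)
    (D : ℕ) (v : GradedMod.free R σ deg) :
    f (freeComponent deg D v) = freeComponent deg' D (f v) := by
  classical
  suffices f.toAddMonoidHom.comp (freeComponent deg D) =
      (freeComponent deg' D).comp f.toAddMonoidHom from DFunLike.congr_fun this v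
  refine AddMonoidHom.functions_ext' _ _ _ fun i => AddMonoidAlgebra.addMonoidHom_ext fun a r => ?_
  have hmem : (Pi.single i (monomial a r) : ι → MvPolynomial σ R) ∈
      (GradedMod.free R σ deg).gr (a.degree + deg i) := by
    refine GradedMod.mem_free.2 fun j => ?_
    rcases eq_or_ne j i with rfl | hj
    · rw [Pi.single_eq_same]
      exact monomial_mem_shiftedHomogeneous a r (deg j)
    · rw [Pi.single_eq_of_ne hj]
      exact AddSubgroup.zero_mem _
  change f (freeComponent deg D (Pi.single i (monomial a r))) =
    freeComponent deg' D (f (Pi.single i (monomial a r)))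
  rw [freeComponent_of_mem hmem, freeComponent_of_mem (hf hmem),
    apply_ite f, map_zero]

end HomogeneousComponents

section VariableIdeals

variable {R : Type} [CommRing R] {σ : Type}

variable (R) in
/-- The ideal generated by the variables in `s`. -/
def varIdeal (s : Finset σ) : Ideal (MvPolynomial σ R) := Ideal.span (X '' (s : Set σ))

theorem mem_varIdeal {s : Finset σ} {p : MvPolynomial σ R} :
    p ∈ varIdeal R s ↔ ∀ a, coeff a p ≠ 0 → ∃ i ∈ s, a i ≠ 0 := by
  simp only [varIdeal, mem_ideal_span_X_image, mem_support_iff, Finset.mem_coe]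

theorem mem_varIdeal_of_X_mul_mem {s : Finset σ} {i : σ} (hi : i ∉ s) {p : MvPolynomial σ R}
    (hp : X i * p ∈ varIdeal R s) : p ∈ varIdeal R s := by
  refine mem_varIdeal.2 fun a ha => ?_
  rw [← coeff_X_mul] at ha
  obtain ⟨j, hj, hne⟩ := mem_varIdeal.1 hp _ ha
  refine ⟨j, hj, ?_⟩
  rwa [Finsupp.add_apply, Finsupp.single_eq_of_ne (ne_of_mem_of_not_mem hj hi), zero_add] at hne

theorem shiftedComponent_mem_varIdeal {s : Finset σ} {p : MvPolynomial σ R}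
    (hp : p ∈ varIdeal R s) (d D : ℕ) : shiftedComponent d D p ∈ varIdeal R s := by
  refine mem_varIdeal.2 fun a ha => mem_varIdeal.1 hp a ?_
  rw [coeff_shiftedComponent] at ha
  exact (ite_ne_right_iff.1 ha).2

theorem coeff_zero_ne_zero_of_notMem_varIdeal [Fintype σ] {p : MvPolynomial σ R}
    (hp : p ∉ varIdeal R Finset.univ) : coeff 0 p ≠ 0 := by
  refine fun h0 => hp (mem_varIdeal.2 fun a ha => ?_)
  obtain ⟨i, hi⟩ := Finsupp.ne_iff.1 fun h : a = 0 => ha (h ▸ h0)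
  exact ⟨i, Finset.mem_univ i, hi⟩

variable (R) in
/-- The vectors with entries in the ideal generated by the variables in `s`. -/
def varVectors (s : Finset σ) (ι : Type) : Submodule (MvPolynomial σ R) (ι → MvPolynomial σ R) :=
  Submodule.pi Set.univ fun _ => varIdeal R s

variable {s : Finset σ} {i : σ} {ι : Type} {v : ι → MvPolynomial σ R}

theorem mem_varVectors : v ∈ varVectors R s ι ↔ ∀ j, v j ∈ varIdeal R s := by
  simp only [varVectors, Submodule.mem_pi, Set.mem_univ, forall_const]

theorem mem_varVectors_empty : v ∈ varVectors R ∅ ι ↔ v = 0 := by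
  simp only [mem_varVectors, varIdeal, Finset.coe_empty, Set.image_empty, Ideal.span_empty,
    Ideal.mem_bot, funext_iff, Pi.zero_apply]

theorem varVectors_mono {t : Finset σ} (h : s ⊆ t) : varVectors R s ι ≤ varVectors R t ι :=
  fun _ hv => mem_varVectors.2 fun j =>
    Ideal.span_mono (Set.image_mono (Finset.coe_subset.2 h)) (mem_varVectors.1 hv j)

theorem X_smul_mem_varVectors (hi : i ∈ s) (v : ι → MvPolynomial σ R) :
    (X i : MvPolynomial σ R) • v ∈ varVectors R s ι :=
  mem_varVectors.2 fun _ => Ideal.mul_mem_right _ _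
    (Ideal.subset_span (Set.mem_image_of_mem X (Finset.mem_coe.2 hi)))

theorem mem_varVectors_of_X_smul_mem (hi : i ∉ s)
    (hv : (X i : MvPolynomial σ R) • v ∈ varVectors R s ι) : v ∈ varVectors R s ι :=
  mem_varVectors.2 fun j => mem_varIdeal_of_X_mul_mem hi (mem_varVectors.1 hv j)

theorem exists_eq_add_X_smul [DecidableEq σ] (hv : v ∈ varVectors R (insert i s) ι) :
    ∃ x ∈ varVectors R s ι, ∃ y, v = x + (X i : MvPolynomial σ R) • y := by
  simp only [mem_varVectors, varIdeal, Finset.coe_insert, Set.image_insert_eq,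
    Ideal.mem_span_insert] at hv
  choose y x hx hv using hv
  exact ⟨x, mem_varVectors.2 hx, y, funext fun j => by
    rw [hv, add_comm, mul_comm, Pi.add_apply, Pi.smul_apply, smul_eq_mul]⟩

theorem map_mem_varVectors {κ : Type} [Finite ι] (hv : v ∈ varVectors R s ι)
    (f : (ι → MvPolynomial σ R) →ₗ[MvPolynomial σ R] (κ → MvPolynomial σ R)) :
    f v ∈ varVectors R s κ :=
  mem_varVectors.2 (Ideal.map_pi _ v (mem_varVectors.1 hv) f)

end VariableIdeals

section Socles

variable {R : Type} [CommRing R] {σ : Type}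

namespace FreeComplex

variable (C : FreeComplex R σ) {s : Finset σ} {r N : ℕ}

/-- The elements of the `r`-th module of a complex that are boundaries modulo the variables
in `s`. -/
def boundaries (s : Finset σ) (r : ℕ) :
    Submodule (MvPolynomial σ R) (C.ι r → MvPolynomial σ R) :=
  LinearMap.range (C.d r) ⊔ varVectors R s (C.ι r)

/-- A homogeneous element of degree `N` representing a nonzero socle element of the quotient of the
`r`-th module of a complex by the boundaries modulo the variables in `s`. -/
structure IsSocle (s : Finset σ) (r N : ℕ) (u : C.ι r → MvPolynomial σ R) : Prop where
  mem : u ∈ (GradedMod.free R σ (C.deg r)).gr N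
  notMem : u ∉ C.boundaries s r
  X_smul_mem : ∀ i, (X i : MvPolynomial σ R) • u ∈ C.boundaries s r

variable {C}

theorem mem_boundaries {u : C.ι r → MvPolynomial σ R} :
    u ∈ C.boundaries s r ↔ ∃ v, u - C.d r v ∈ varVectors R s (C.ι r) := by
  refine Submodule.mem_sup.trans ⟨?_, fun ⟨v, hv⟩ => ⟨_, ⟨v, rfl⟩, _, hv, add_sub_cancel _ _⟩⟩
  rintro ⟨_, ⟨v, rfl⟩, x, hx, rfl⟩
  exact ⟨v, by rwa [add_sub_cancel_left]⟩

theorem mem_boundaries_insert [DecidableEq σ] {a : σ} {u v : C.ι r → MvPolynomial σ R}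
    (h : u - (X a : MvPolynomial σ R) • v ∈ C.boundaries s r) :
    u ∈ C.boundaries (insert a s) r := by
  rw [← sub_add_cancel u ((X a : MvPolynomial σ R) • v)]
  exact add_mem (sup_le_sup_left (varVectors_mono (Finset.subset_insert a s)) _ h)
    (Submodule.mem_sup_right (X_smul_mem_varVectors (Finset.mem_insert_self a s) v))

theorem mem_boundaries_succ (hs : s.card ≤ r) {v : C.ι (r + 1) → MvPolynomial σ R}
    (hv : C.d r v ∈ varVectors R s (C.ι r)) : v ∈ C.boundaries s (r + 1) := by
  classical
  induction s using Finset.induction_on generalizing r v with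
  | empty => exact Submodule.mem_sup_left ((C.exact r v).1 (mem_varVectors_empty.1 hv))
  | insert a s ha ih =>
    rw [Finset.card_insert_of_notMem ha] at hs
    obtain ⟨r, rfl⟩ : ∃ r', r = r' + 1 := ⟨r - 1, by omega⟩
    obtain ⟨x, hx, y, hxy⟩ := exists_eq_add_X_smul hv
    have hdy : C.d r y ∈ varVectors R s (C.ι r) := by
      refine mem_varVectors_of_X_smul_mem ha ?_
      rw [← map_smul, ← sub_eq_of_eq_add' hxy, map_sub, (C.exact r).apply_apply_eq_zero, zero_sub]
      exact neg_mem (map_mem_varVectors hx _)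
    obtain ⟨z, hz⟩ := mem_boundaries.1 (ih (by omega) hdy)
    refine mem_boundaries_insert (v := z) (ih (by omega) ?_)
    rw [map_sub, map_smul, hxy, add_sub_assoc, ← smul_sub]
    exact add_mem hx (Submodule.smul_mem _ _ hz)

theorem IsSocle.exists_X_smul_sub_mem {u : C.ι r → MvPolynomial σ R} (hu : C.IsSocle s r N u)
    (a : σ) : ∃ v ∈ (GradedMod.free R σ (C.deg (r + 1))).gr (N + 1),
      (X a : MvPolynomial σ R) • u - C.d r v ∈ varVectors R s (C.ι r) := by
  obtain ⟨v, hv⟩ := mem_boundaries.1 (hu.X_smul_mem a)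
  refine ⟨freeComponent (C.deg (r + 1)) (N + 1) v, freeComponent_mem _ _ _, ?_⟩
  have hau : (X a : MvPolynomial σ R) • u ∈ (GradedMod.free R σ (C.deg r)).gr (N + 1) :=
    add_comm 1 N ▸ (GradedMod.free R σ (C.deg r)).smul_mem (isHomogeneous_X R a) hu.mem
  have hcomponent : freeComponent (C.deg r) (N + 1) (X a • u) = X a • u :=
    (freeComponent_of_mem hau).trans (if_pos rfl)
  rw [map_freeComponent (C.d_mem r), ← hcomponent, ← map_sub]
  exact mem_varVectors.2 fun j => shiftedComponent_mem_varIdeal (mem_varVectors.1 hv j) _ _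

theorem notMem_boundaries_insert [DecidableEq σ] {a : σ} (ha : a ∉ s)
    {u : C.ι r → MvPolynomial σ R} {v : C.ι (r + 1) → MvPolynomial σ R}
    (hv : (X a : MvPolynomial σ R) • u - C.d r v ∈ varVectors R s (C.ι r))
    (hu : u ∉ C.boundaries s r) : v ∉ C.boundaries (insert a s) (r + 1) := by
  refine fun h => hu (mem_boundaries.2 ?_)
  obtain ⟨w, hw⟩ := mem_boundaries.1 h
  obtain ⟨x, hx, y, hxy⟩ := exists_eq_add_X_smul hw
  refine ⟨y, mem_varVectors_of_X_smul_mem ha ?_⟩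
  have hdv : C.d r v = C.d r x + (X a : MvPolynomial σ R) • C.d r y := by
    rw [← map_smul, ← map_add, ← hxy, map_sub, (C.exact r).apply_apply_eq_zero, sub_zero]
  rw [smul_sub, ← add_sub_cancel_left (C.d r x) (X a • C.d r y), ← hdv, ← sub_add]
  exact add_mem hv (map_mem_varVectors hx _)

theorem X_smul_mem_boundaries_insert [DecidableEq σ] (hs : s.card ≤ r) {a i : σ}
    {u : C.ι r → MvPolynomial σ R} {v : C.ι (r + 1) → MvPolynomial σ R}
    (hv : (X a : MvPolynomial σ R) • u - C.d r v ∈ varVectors R s (C.ι r))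
    (hu : (X i : MvPolynomial σ R) • u ∈ C.boundaries s r) :
    (X i : MvPolynomial σ R) • v ∈ C.boundaries (insert a s) (r + 1) := by
  obtain ⟨w, hw⟩ := mem_boundaries.1 hu
  refine mem_boundaries_insert (v := w) (mem_boundaries_succ hs ?_)
  have hd : C.d r ((X i : MvPolynomial σ R) • v - (X a : MvPolynomial σ R) • w) =
      (X a : MvPolynomial σ R) • ((X i : MvPolynomial σ R) • u - C.d r w) -
        (X i : MvPolynomial σ R) • ((X a : MvPolynomial σ R) • u - C.d r v) := by
    rw [map_sub, map_smul, map_smul, smul_sub, smul_sub, smul_comm (X a) (X i) u]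
    abel
  rw [hd]
  exact sub_mem (Submodule.smul_mem _ _ hw) (Submodule.smul_mem _ _ hv)

theorem IsSocle.exists_isSocle_insert [DecidableEq σ] {u : C.ι r → MvPolynomial σ R}
    (hu : C.IsSocle s r N u) (hs : s.card ≤ r) {a : σ} (ha : a ∉ s) :
    ∃ v, C.IsSocle (insert a s) (r + 1) (N + 1) v := by
  obtain ⟨v, hvN, hv⟩ := hu.exists_X_smul_sub_mem a
  exact ⟨v, hvN, notMem_boundaries_insert ha hv hu.notMem,
    fun i => X_smul_mem_boundaries_insert hs hv (hu.X_smul_mem i)⟩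

theorem IsSocle.exists_isSocle_card {u : C.ι 0 → MvPolynomial σ R} (hu : C.IsSocle ∅ 0 N u)
    (s : Finset σ) : ∃ v, C.IsSocle s s.card (N + s.card) v := by
  classical
  induction s using Finset.induction_on with
  | empty => exact ⟨u, hu⟩
  | insert a s ha ih =>
    obtain ⟨v, hv⟩ := ih
    rw [Finset.card_insert_of_notMem ha]
    exact hv.exists_isSocle_insert le_rfl ha

theorem IsSocle.exists_deg_eq [Fintype σ] {u : C.ι 0 → MvPolynomial σ R}
    (hu : C.IsSocle ∅ 0 N u) : ∃ j, C.deg (Fintype.card σ) j = N + Fintype.card σ := by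
  obtain ⟨v, hv⟩ := hu.exists_isSocle_card Finset.univ
  have hmem : v ∉ varVectors R Finset.univ _ := fun h =>
    hv.notMem (Submodule.mem_sup_right h)
  simp only [mem_varVectors, not_forall] at hmem
  obtain ⟨j, hj⟩ := hmem
  refine ⟨j, ?_⟩
  simpa using mem_shiftedHomogeneous.1 (GradedMod.mem_free.1 hv.mem j) 0
    (coeff_zero_ne_zero_of_notMem_varIdeal hj)

end FreeComplex

theorem GradedFreeRes.exists_deg_eq {k : Type} [Field k] {J : Ideal (MvPolynomial σ k)} [Fintype σ]
    (F : GradedFreeRes k σ J) {u : MvPolynomial σ k} {N i : ℕ} (hi : Fintype.card σ = i + 1)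
    (hN : u.IsHomogeneous N) (hu : u ∉ J) (hX : ∀ i, X i * u ∈ J) :
    ∃ b, F.deg i b = N + i + 1 := by
  have hmem {p : MvPolynomial σ k} :
      (fun _ : Unit => p) ∈ F.toFreeComplex.boundaries ∅ 0 ↔ p ∈ J := by
    refine FreeComplex.mem_boundaries.trans (Iff.trans (exists_congr fun v => ?_)
      F.exists_toFreeComplex_d_zero_eq)
    exact mem_varVectors_empty.trans (sub_eq_zero.trans eq_comm)
  have hsocle : F.toFreeComplex.IsSocle ∅ 0 N (fun _ : Unit => u) :=
    ⟨GradedMod.mem_free.2 fun _ => isHomogeneous_iff_mem_shiftedHomogeneous.1 hN,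
      fun h => hu (hmem.1 h), fun i => hmem.2 (hX i)⟩
  have h := hsocle.exists_deg_eq
  rwa [hi] at h

end Socles

section Powers

section Monomials

variable {R : Type} [CommRing R] {σ : Type} {U : UpperSet (σ →₀ ℕ)}

theorem monomial_mem_monomialIdeal [Nontrivial R] {a : σ →₀ ℕ} :
    monomial a 1 ∈ monomialIdeal R U ↔ a ∈ U := by
  classical
  simp only [mem_monomialIdeal, coeff_monomial, ne_eq, ite_eq_right_iff, one_ne_zero, imp_false,
    not_not, forall_eq']

theorem monomialIdeal_le {I : Ideal (MvPolynomial σ R)} (h : ∀ a ∈ U, monomial a 1 ∈ I) :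
    monomialIdeal R U ≤ I := by
  intro p hp
  rw [p.as_sum]
  refine Ideal.sum_mem _ fun a ha => ?_
  rw [← mul_one (coeff a p), ← C_mul_monomial]
  exact I.mul_mem_left _ (h a (hp ha))

open scoped Pointwise in
theorem monomialIdeal_mul_le {V W : UpperSet (σ →₀ ℕ)} (h : ∀ a ∈ U, ∀ b ∈ V, a + b ∈ W) :
    monomialIdeal R U * monomialIdeal R V ≤ monomialIdeal R W := by
  refine Ideal.mul_le.2 fun p hp q hq => ?_
  have hpq : p * q ∈ restrictSupport R ((U : Set (σ →₀ ℕ)) + (V : Set (σ →₀ ℕ))) := by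
    rw [restrictSupport_add]
    exact Submodule.mul_mem_mul hp hq
  exact restrictSupport_mono R (Set.add_subset_iff.2 h) hpq

end Monomials

variable {k : Type} [Field k] {n : ℕ} [NeZero n] (w : Fin n → ℕ)

theorem add_mem_powUpperSet {w} {s t : ℕ} {a b : Fin n →₀ ℕ} (ha : a ∈ powUpperSet w s)
    (hb : b ∈ powUpperSet w t) : a + b ∈ powUpperSet w (s + t) := by
  obtain ⟨c, rfl, hc⟩ := mem_powUpperSet.1 ha
  obtain ⟨d, rfl, hd⟩ := mem_powUpperSet.1 hb
  refine mem_powUpperSet.2 ⟨c + d, Finset.sum_add_distrib, ?_⟩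
  rw [powExponent_add]
  exact add_le_add hc hd

theorem cycIdeal_le : cycIdeal k n w ≤ monomialIdeal k (powUpperSet w 1) := by
  refine Ideal.span_le.2 (Set.range_subset_iff.2 fun i => monomial_mem_monomialIdeal.2 ?_)
  refine mem_powUpperSet.2 ⟨Pi.single i 1, Fintype.sum_pi_single' i 1, ?_⟩
  rw [powExponent_single, one_smul]

theorem monomial_powExponent_mem (c : Fin n → ℕ) :
    monomial (powExponent w c) 1 ∈ cycIdeal k n w ^ ∑ i, c i := by
  rw [powExponent, monomial_sum_one, ← Finset.prod_pow_eq_pow_sum]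
  refine Ideal.prod_mem_prod fun i _ => ?_
  rw [← one_pow (c i), ← monomial_pow]
  exact Ideal.pow_mem_pow (Ideal.subset_span (Set.mem_range_self i)) _

theorem cycIdeal_pow (t : ℕ) : cycIdeal k n w ^ t = monomialIdeal k (powUpperSet w t) := by
  refine le_antisymm ?_ (monomialIdeal_le fun a ha => ?_)
  · induction t with
    | zero =>
      refine fun p _ a _ => mem_powUpperSet.2 ⟨0, Finset.sum_const_zero, ?_⟩
      simp only [powExponent, Pi.zero_apply, zero_smul, Finset.sum_const_zero, zero_le]
    | succ t ih =>
      rw [pow_succ]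
      exact (Ideal.mul_mono ih (cycIdeal_le w)).trans
        (monomialIdeal_mul_le fun _ ha _ hb => add_mem_powUpperSet ha hb)
  · obtain ⟨c, rfl, hc⟩ := mem_powUpperSet.1 ha
    rw [← tsub_add_cancel_of_le hc, ← one_mul (1 : k), ← monomial_mul]
    exact Ideal.mul_mem_left _ _ (monomial_powExponent_mem w c)

end Powers

section Regularity

section Betti

variable {k : Type} [Field k] {σ : Type} {I : Ideal (MvPolynomial σ k)} {r i : ℕ}

theorem exists_deg_eq_of_betti_ne_zero {j : ℕ} (h : betti k σ I i j ≠ 0)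
    (F : GradedFreeRes k σ I) : ∃ b, F.deg i b = j := by
  have hle : betti k σ I i j ≤ (Finset.univ.filter fun b => F.deg i b = j).card :=
    Nat.sInf_le ⟨F, rfl⟩
  obtain ⟨b, hb⟩ := Finset.card_pos.1 ((Nat.pos_of_ne_zero h).trans_le hle)
  exact ⟨b, (Finset.mem_filter.1 hb).2⟩

theorem betti_ne_zero {j : ℕ} [Nonempty (GradedFreeRes k σ I)]
    (h : ∀ F : GradedFreeRes k σ I, ∃ b, F.deg i b = j) : betti k σ I i j ≠ 0 := by
  obtain ⟨F₀⟩ := ‹Nonempty (GradedFreeRes k σ I)›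
  obtain ⟨F, hF⟩ : betti k σ I i j ∈ {r | ∃ F : GradedFreeRes k σ I,
      r = (Finset.univ.filter fun b => F.deg i b = j).card} := Nat.sInf_mem ⟨_, F₀, rfl⟩
  obtain ⟨b, hb⟩ := h F
  rw [hF]
  exact Finset.card_ne_zero_of_mem (Finset.mem_filter.2 ⟨Finset.mem_univ b, hb⟩)

theorem reg_eq (F₀ : GradedFreeRes k σ I) (hF₀ : ∀ i b, F₀.deg i b ≤ r + i)
    (h : ∀ F : GradedFreeRes k σ I, ∃ b, F.deg i b = r + i) : reg k σ I = r := by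
  have : Nonempty (GradedFreeRes k σ I) := ⟨F₀⟩
  have hle : ∀ s ∈ {s | ∃ i j : ℕ, betti k σ I i j ≠ 0 ∧ s = j - i}, s ≤ r := by
    rintro _ ⟨i, j, hij, rfl⟩
    obtain ⟨b, rfl⟩ := exists_deg_eq_of_betti_ne_zero hij F₀
    exact tsub_le_iff_right.2 (hF₀ i b)
  exact le_antisymm (csSup_le' hle)
    (le_csSup ⟨r, hle⟩ ⟨i, r + i, betti_ne_zero h, (Nat.add_sub_cancel r i).symm⟩)

end Betti

section Socle

variable {n : ℕ} [NeZero n] {w c : Fin n → ℕ} {m : Fin n} {t : ℕ}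

/-- The exponent of the monomial `L_m ^ t * ∏ x_i ^ (w_i - 1)`, which represents a socle element
modulo the power `t + 1` of the edge ideal. -/
def socleExponent (w : Fin n → ℕ) (m : Fin n) (t : ℕ) : Fin n →₀ ℕ :=
  Finsupp.equivFunOnFinite.symm (fun p => w p - 1) + powExponent w (Pi.single m t)

theorem socleExponent_apply (p : Fin n) : socleExponent w m t p =
    w p - 1 + (w p * (Pi.single m t : Fin n → ℕ) p + (Pi.single m t : Fin n → ℕ) (p + 1)) := by
  rw [socleExponent, Finsupp.add_apply, powExponent_apply]
  rfl

theorem degree_socleExponent (w : Fin n → ℕ) (m : Fin n) (t : ℕ) :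
    (socleExponent w m t).degree = ∑ p, (w p - 1) + t * (w m + 1) := by
  rw [socleExponent, map_add, powExponent_single, map_nsmul, degree_cycE, smul_eq_mul,
    Finsupp.degree_eq_sum]
  rfl

theorem apply_eq_zero_of_powExponent_le (hw : ∀ i, 2 ≤ w i)
    (hle : powExponent w c ≤ socleExponent w m t) {q : Fin n} (hqm : q ≠ m) (hq : q ≠ m - 1) :
    c q = 0 := by
  have hle := hle q
  rw [powExponent_apply, socleExponent_apply, Pi.single_eq_of_ne hqm,
    Pi.single_eq_of_ne (fun h => hq (eq_sub_of_add_eq h))] at hle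
  by_contra h0
  have := Nat.le_mul_of_pos_right (w q) (Nat.pos_of_ne_zero h0)
  have := hw q
  omega

theorem apply_le_of_powExponent_le (hn : 2 ≤ n) (hw : ∀ i, 2 ≤ w i)
    (hle : powExponent w c ≤ socleExponent w m t) : c m ≤ t := by
  have hle := hle m
  rw [powExponent_apply, socleExponent_apply, Pi.single_eq_same,
    Pi.single_eq_of_ne fun h => sub_one_ne hn m (eq_sub_of_add_eq h).symm] at hle
  by_contra! h
  have hmul := Nat.mul_le_mul_left (w m) h
  have := hw m
  rw [Nat.mul_succ] at hmul
  omega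

theorem socleExponent_notMem (hn : 2 ≤ n) (hw : ∀ i, 2 ≤ w i) :
    socleExponent w m t ∉ powUpperSet w (t + 1) := by
  intro h
  obtain ⟨c, hc, hle⟩ := mem_powUpperSet.1 h
  have hsum : c (m - 1) + c m = t + 1 := hc ▸ (Finset.sum_eq_add (m - 1) m (sub_one_ne hn m)
    (fun q _ hq => apply_eq_zero_of_powExponent_le hw hle hq.2 hq.1)
    (fun h => absurd (Finset.mem_univ _) h) (fun h => absurd (Finset.mem_univ _) h)).symm
  have hcm := apply_le_of_powExponent_le hn hw hle
  have hpred := hle (m - 1)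
  rw [powExponent_apply, socleExponent_apply, sub_add_cancel, Pi.single_eq_same,
    Pi.single_eq_of_ne (sub_one_ne hn m), mul_zero, zero_add] at hpred
  obtain ⟨x, hx⟩ : ∃ x, c (m - 1) = x + 1 := ⟨c (m - 1) - 1, by omega⟩
  have hmul : x ≤ w (m - 1) * x := Nat.le_mul_of_pos_left x (by have := hw (m - 1); omega)
  have := hw (m - 1)
  rw [hx, Nat.mul_succ] at hpred
  omega

theorem single_add_socleExponent_mem (hn : 2 ≤ n) (hw : ∀ i, 2 ≤ w i) (i : Fin n) :
    Finsupp.single i 1 + socleExponent w m t ∈ powUpperSet w (t + 1) := by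
  have hle : cycE n w i ≤
      Finsupp.single i 1 + Finsupp.equivFunOnFinite.symm (fun p => w p - 1) := by
    intro p
    have := hw p
    simp only [cycE, Finsupp.add_apply, Finsupp.equivFunOnFinite_symm_apply_apply,
      Finsupp.single_apply]
    have := sub_one_ne hn i
    grind
  refine mem_powUpperSet.2 ⟨Pi.single i 1 + Pi.single m t, ?_, ?_⟩
  · simp only [Pi.add_apply, Finset.sum_add_distrib, Fintype.sum_pi_single', add_comm]
  · rw [powExponent_add, powExponent_single, one_smul, socleExponent, ← add_assoc]
    exact add_le_add_left hle _

theorem GradedFreeRes.exists_deg_eq_of_powUpperSet {k : Type} [Field k] (hn : 2 ≤ n)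
    (hw : ∀ i, 2 ≤ w i) (m : Fin n)
    (F : GradedFreeRes k (Fin n) (monomialIdeal k (powUpperSet w (t + 1)))) :
    ∃ b, F.deg (n - 1) b = ∑ p, (w p - 1) + 1 + t * (w m + 1) + (n - 1) := by
  obtain ⟨b, hb⟩ := F.exists_deg_eq (u := monomial (socleExponent w m t) 1) (i := n - 1)
    (by rw [Fintype.card_fin]; omega) (isHomogeneous_monomial 1 rfl)
    (mt monomial_mem_monomialIdeal.1 (socleExponent_notMem hn hw)) fun i => by
      rw [X, monomial_mul, one_mul]
      exact monomial_mem_monomialIdeal.2 (single_add_socleExponent_mem hn hw i)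
  exact ⟨b, by rw [hb, degree_socleExponent]; omega⟩

end Socle

end Regularity

/-- for the vertex-weighted oriented `n`-cycle with all weights at
least `2`, `reg (I(C_n)^t) = Σ w(x) - n + 1 + (t-1)(w+1)` for all `t ≥ 1`, where
`w` is the largest weight. -/
theorem reg_power_cycle
    (hn : 3 ≤ n) (w : Fin n → ℕ) (hw : ∀ i, 2 ≤ w i) (t : ℕ) (ht : 1 ≤ t) :
    reg k (Fin n) ((cycIdeal k n w) ^ t) =
      (∑ i, w i) - n + 1 + (t - 1) * (Finset.univ.sup w + 1) := by
  obtain ⟨s, rfl⟩ := Nat.exists_eq_add_of_le' ht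
  obtain ⟨m, -, hm⟩ := Finset.exists_mem_eq_sup Finset.univ Finset.univ_nonempty w
  have hmax (i : Fin n) : w i ≤ w m := hm ▸ Finset.le_sup (Finset.mem_univ i)
  have hsum : ∑ i, w i - n = ∑ i, (w i - 1) := by
    rw [Finset.sum_tsub_distrib _ fun i _ => one_le_two.trans (hw i), Fin.sum_const, smul_eq_mul,
      mul_one]
  rw [cycIdeal_pow, hsum, hm, Nat.add_sub_cancel]
  obtain ⟨F₀, hF₀⟩ := HasRegLE.exists_gradedFreeRes
    (MonomialRegLE.powUpperSet_succ (R := k) hn hw hmax s 0)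
  exact reg_eq F₀ hF₀ (GradedFreeRes.exists_deg_eq_of_powUpperSet (by omega) hw m)

end PaperReg
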